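/- arXiv:math/0504245 — 2 statements merged into one kernel-verified Lean document; each statement's English description precedes it below -/
import Mathlib

section
/- Let f be a non-constant meromorphic function on ℂ, let c ∈ ℂ, let δ < 1 and let ε > 0. Then m(r, f(z+c)/f(z)) = o( T(r+|c|, f)^{1+ε} / r^δ ) as r → ∞, for all r outside a possible exceptional set E of finite logarithmic measure. -/
open MeasureTheory Filter Topology Metric

noncomputable section

/-- Positive part of the logarithm: `log⁺ x = max (log x) 0`. -/
def logPlus (x : ℝ) : ℝ := max (Real.log x) 0

/-- The point `r e^{iθ}` on the circle of radius `r`. -/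
def circ (r θ : ℝ) : ℂ := (r : ℂ) * Complex.exp (θ * Complex.I)

/-- Nevanlinna proximity function `m(r, f)`. -/
def nevm (f : ℂ → ℂ) (r : ℝ) : ℝ :=
  (2 * Real.pi)⁻¹ * ∫ θ in (0:ℝ)..(2 * Real.pi), logPlus ‖f (circ r θ)‖

/-- Order of the pole of `f` at `x` (`0` if `f` extends analytically over `x`);
determined through the punctured neighbourhood of `x`. -/
def poleOrd (f : ℂ → ℂ) (x : ℂ) : ℕ :=
  sInf {n : ℕ | ∃ g : ℂ → ℂ, AnalyticAt ℂ g x ∧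
    ∀ᶠ w in 𝓝[≠] x, (w - x) ^ n * f w = g w}

/-- Unintegrated counting function `n(r, f)`: number of poles of `f` in `|z| ≤ r`,
counted with multiplicity. -/
def nevn (f : ℂ → ℂ) (r : ℝ) : ℕ := ∑ᶠ z ∈ closedBall (0:ℂ) r, poleOrd f z

/-- Integrated counting function `N(r, f)`. -/
def nevN (f : ℂ → ℂ) (r : ℝ) : ℝ :=
  (∫ t in (0:ℝ)..r, ((nevn f t : ℝ) - (nevn f 0 : ℝ)) / t) + (nevn f 0 : ℝ) * Real.log r

/-- Nevanlinna characteristic `T(r, f) = m(r, f) + N(r, f)`. -/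
def nevT (f : ℂ → ℂ) (r : ℝ) : ℝ := nevm f r + nevN f r

/-- A subset of `(0, ∞)` has finite logarithmic measure: `∫_E dr/r < ∞`. -/
def FinLogMeasure (E : Set ℝ) : Prop :=
  E ⊆ Set.Ioi 0 ∧ ∫⁻ r in E, ENNReal.ofReal r⁻¹ < ⊤

/-- `f` is a non-constant function. -/
def Nonconstant (f : ℂ → ℂ) : Prop := ¬ ∃ a : ℂ, ∀ z : ℂ, f z = a

/-- `f` has finite order: `limsup_{r→∞} log T(r,f) / log r < ∞`. -/
def FiniteOrder (f : ℂ → ℂ) : Prop :=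
  IsBoundedUnder (· ≤ ·) atTop fun r : ℝ => Real.log (nevT f r) / Real.log r

end


section

open ValueDistribution MeromorphicOn


lemma nevm_eq_proximity (f : ℂ → ℂ) (r : ℝ) : nevm f r = proximity f ⊤ r := by
  rw [proximity_top]
  simp only [nevm, Real.circleAverage, smul_eq_mul, circ, circleMap, zero_add, logPlus,
    Real.posLog]
  simp only [max_comm]

lemma poleOrd_eq {f : ℂ → ℂ} {x : ℂ} (hf : MeromorphicAt f x) :
    poleOrd f x = (- (meromorphicOrderAt f x).untop₀).toNat := by
  have key : ∀ n : ℕ, (∃ g : ℂ → ℂ, AnalyticAt ℂ g x ∧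
      ∀ᶠ w in 𝓝[≠] x, (w - x) ^ n * f w = g w) ↔ 0 ≤ (n : WithTop ℤ) + meromorphicOrderAt f x := by
    intro n
    have hm : MeromorphicAt (fun w => (w - x) ^ n * f w) x := by fun_prop
    have ho : meromorphicOrderAt (fun w => (w - x) ^ n * f w) x
        = (n : WithTop ℤ) + meromorphicOrderAt f x := by
      have h1 : meromorphicOrderAt (fun w => (w - x) ^ n) x = (n : WithTop ℤ) := by
        have h2 : (fun w : ℂ => (w - x) ^ n) = (fun w : ℂ => w - x) ^ n := rfl
        rw [h2, meromorphicOrderAt_pow (by fun_prop), meromorphicOrderAt_id_sub_const]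
        simp
      rw [fun_meromorphicOrderAt_mul (by fun_prop) hf, h1]
    rw [← ho]
    constructor
    · rintro ⟨g, hg, hgw⟩
      rw [meromorphicOrderAt_congr hgw]
      exact hg.meromorphicOrderAt_nonneg
    · intro h
      refine ⟨toMeromorphicNFAt (fun w => (w - x) ^ n * f w) x, ?_, ?_⟩
      · rw [← meromorphicNFAt_toMeromorphicNFAt.meromorphicOrderAt_nonneg_iff_analyticAt,
          ← meromorphicOrderAt_congr hm.eq_nhdsNE_toMeromorphicNFAt]
        exact h
      · exact hm.eq_nhdsNE_toMeromorphicNFAt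
  unfold poleOrd
  simp_rw [key]
  cases h : meromorphicOrderAt f x with
  | top => simp
  | coe k =>
    have : {n : ℕ | 0 ≤ (n : WithTop ℤ) + (k : WithTop ℤ)} = Set.Ici (-k).toNat := by
      ext n
      have h2 : ((n : WithTop ℤ) + (k : WithTop ℤ)) = (((n : ℤ) + k : ℤ) : WithTop ℤ) := by
        push_cast; rfl
      simp only [Set.mem_ofPred_eq, Set.mem_Ici, h2]
      rw [← WithTop.coe_zero, WithTop.coe_le_coe]
      omega
    rw [this]
    simp

lemma negPart_divisor_eq {f : ℂ → ℂ} (hf : Meromorphic f) (x : ℂ) :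
    (divisor f Set.univ)⁻ x = (poleOrd f x : ℤ) := by
  rw [poleOrd_eq (hf x), Function.locallyFinsuppWithin.negPart_apply,
    divisor_apply hf.meromorphicOn (Set.mem_univ x), Int.toNat_eq_max]
  rfl

lemma nevN_eq_logCounting {f : ℂ → ℂ} (hf : Meromorphic f) {r : ℝ} (hr : 0 < r) :
    nevN f r = logCounting f ⊤ r := by
  have hfin : (closedBall (0:ℂ) r ∩ Function.support (poleOrd f)).Finite := by
    have := ((divisor f Set.univ)⁻.toClosedBall r).finiteSupport (isCompact_closedBall 0 |r|)
    refine this.subset ?_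
    intro z hz
    have h1 : z ∈ closedBall (0:ℂ) |r| := by rw [abs_of_pos hr]; exact hz.1
    rw [Function.mem_support, Function.locallyFinsuppWithin.toClosedBall_eval_within _ h1,
      negPart_divisor_eq hf]
    exact_mod_cast hz.2
  set S := hfin.toFinset with hS
  have hn : ∀ t ≤ r, (nevn f t : ℝ) = ∑ z ∈ S, if ‖z‖ ≤ t then (poleOrd f z : ℝ) else 0 := by
    intro t ht
    have : nevn f t = ∑ z ∈ S, if ‖z‖ ≤ t then poleOrd f z else 0 := by
      unfold nevn
      rw [finsum_mem_def, finsum_eq_sum_of_support_subset (s := S)]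
      · refine Finset.sum_congr rfl fun z _ => ?_
        by_cases h : ‖z‖ ≤ t
        · rw [Set.indicator_of_mem (by simpa using h), if_pos h]
        · rw [Set.indicator_of_notMem (by simpa using h), if_neg h]
      · intro z hz
        rw [Function.mem_support] at hz
        have h1 : z ∈ closedBall (0:ℂ) t := by
          by_contra hc; simp [hc] at hz
        rw [Set.indicator_of_mem h1] at hz
        simp only [hS, Set.Finite.coe_toFinset]
        exact ⟨closedBall_subset_closedBall ht h1, hz⟩
    rw [this]; push_cast; rfl
  have hint : ∀ z ∈ S, IntervalIntegrable (fun t =>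
      ((if ‖z‖ ≤ t then (poleOrd f z : ℝ) else 0) - (if ‖z‖ ≤ 0 then (poleOrd f z : ℝ) else 0)) / t)
      volume 0 r ∧ ∫ t in (0:ℝ)..r, ((if ‖z‖ ≤ t then (poleOrd f z : ℝ) else 0) -
        (if ‖z‖ ≤ 0 then (poleOrd f z : ℝ) else 0)) / t
        = (poleOrd f z : ℝ) * Real.log (r * ‖z‖⁻¹) := by
    intro z hz
    by_cases h0 : z = 0
    · have : ∀ t ∈ Set.uIoc 0 r, ((if ‖z‖ ≤ t then (poleOrd f z : ℝ) else 0) -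
        (if ‖z‖ ≤ 0 then (poleOrd f z : ℝ) else 0)) / t = 0 := by
        intro t ht
        rw [Set.uIoc_of_le hr.le] at ht
        simp [h0, ht.1.le]
      constructor
      · refine (intervalIntegrable_const (c := (0:ℝ))).congr ?_
        intro t ht
        exact (this t ht).symm
      · rw [intervalIntegral.integral_congr_ae (g := fun _ => 0) (ae_of_all _ this)]
        simp [h0]
    · have hzpos : 0 < ‖z‖ := by simpa using h0
      have hzr : ‖z‖ ≤ r := by
        have := (hfin.mem_toFinset.1 hz).1
        simpa using this
      have hi1 : IntervalIntegrable (fun t =>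
        ((if ‖z‖ ≤ t then (poleOrd f z : ℝ) else 0) - (if ‖z‖ ≤ 0 then (poleOrd f z : ℝ) else 0)) / t)
        volume 0 ‖z‖ ∧ ∫ t in (0:ℝ)..‖z‖, ((if ‖z‖ ≤ t then (poleOrd f z : ℝ) else 0) -
        (if ‖z‖ ≤ 0 then (poleOrd f z : ℝ) else 0)) / t = 0 := by
        have hae : ∀ᵐ t ∂volume, t ∈ Set.uIoc 0 ‖z‖ → ((if ‖z‖ ≤ t then (poleOrd f z : ℝ) else 0) -
          (if ‖z‖ ≤ 0 then (poleOrd f z : ℝ) else 0)) / t = 0 := by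
          have : ∀ᵐ t ∂(volume : Measure ℝ), t ≠ ‖z‖ := by
            simp [ae_iff]
          filter_upwards [this] with t ht ht2
          rw [Set.uIoc_of_le hzpos.le] at ht2
          have h3 : ¬ ‖z‖ ≤ t := not_le.2 (lt_of_le_of_ne ht2.2 ht)
          simp [h3, h0]
        constructor
        · refine (intervalIntegrable_const (c := (0:ℝ))).congr_ae ?_
          rw [EventuallyEq, ae_restrict_iff' measurableSet_uIoc]
          filter_upwards [hae] with t ht ht2
          exact (ht ht2).symm
        · rw [intervalIntegral.integral_congr_ae (g := fun _ => 0) hae]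
          simp
      have he2 : ∀ t ∈ Set.uIcc ‖z‖ r, (poleOrd f z : ℝ) * t⁻¹ =
          ((if ‖z‖ ≤ t then (poleOrd f z : ℝ) else 0) -
          (if ‖z‖ ≤ 0 then (poleOrd f z : ℝ) else 0)) / t := by
        intro t ht
        rw [Set.uIcc_of_le hzr] at ht
        simp [h0, ht.1, div_eq_mul_inv]
      have h0n : (0:ℝ) ∉ Set.uIcc ‖z‖ r := by
        rw [Set.uIcc_of_le hzr]; simp [h0]
      have hi2 : IntervalIntegrable (fun t =>
        ((if ‖z‖ ≤ t then (poleOrd f z : ℝ) else 0) - (if ‖z‖ ≤ 0 then (poleOrd f z : ℝ) else 0)) / t)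
        volume ‖z‖ r := by
        have : IntervalIntegrable (fun t => (poleOrd f z : ℝ) * t⁻¹) volume ‖z‖ r := by
          apply IntervalIntegrable.const_mul
          exact intervalIntegral.intervalIntegrable_inv (fun t ht h => h0n (h ▸ ht)) continuousOn_id
        refine this.congr ?_
        intro t ht
        exact he2 t (Set.uIoc_subset_uIcc ht)
      refine ⟨hi1.1.trans hi2, ?_⟩
      rw [← intervalIntegral.integral_add_adjacent_intervals hi1.1 hi2, hi1.2, zero_add,
        ← intervalIntegral.integral_congr he2, intervalIntegral.integral_const_mul,
        integral_inv h0n, div_eq_mul_inv]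
  have hI : ∫ t in (0:ℝ)..r, ((nevn f t : ℝ) - (nevn f 0 : ℝ)) / t
      = ∑ z ∈ S, (poleOrd f z : ℝ) * Real.log (r * ‖z‖⁻¹) := by
    rw [← Finset.sum_congr rfl (fun z hz => (hint z hz).2),
      ← intervalIntegral.integral_finsetSum (fun z hz => (hint z hz).1)]
    apply intervalIntegral.integral_congr
    intro t ht
    rw [Set.uIcc_of_le hr.le] at ht
    simp only
    rw [hn t ht.2, hn 0 hr.le, ← Finset.sum_sub_distrib, Finset.sum_div]
  have h0 : (nevn f 0 : ℝ) = poleOrd f 0 := by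
    unfold nevn
    simp
  unfold nevN
  rw [hI, h0, logCounting_top]
  simp only [Function.locallyFinsuppWithin.logCounting, AddMonoidHom.coe_mk, ZeroHom.coe_mk]
  rw [negPart_divisor_eq hf]
  congr 1
  rw [finsum_eq_sum_of_support_subset (s := S)]
  · refine Finset.sum_congr rfl fun z hz => ?_
    have h1 : z ∈ closedBall (0:ℂ) |r| := by
      rw [abs_of_pos hr]; exact (hfin.mem_toFinset.1 hz).1
    rw [Function.locallyFinsuppWithin.toClosedBall_eval_within _ h1, negPart_divisor_eq hf]
    simp
  · intro z hz
    rw [Function.mem_support] at hz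
    have h1 : z ∈ closedBall (0:ℂ) |r| := by
      by_contra hc
      rw [Function.locallyFinsuppWithin.apply_eq_zero_of_notMem _ hc] at hz
      simp at hz
    rw [Function.locallyFinsuppWithin.toClosedBall_eval_within _ h1, negPart_divisor_eq hf] at hz
    simp only [hS, Set.Finite.coe_toFinset]
    refine ⟨by rwa [abs_of_pos hr] at h1, ?_⟩
    rw [Function.mem_support]
    intro h
    simp [h] at hz

lemma nevT_eq_characteristic {f : ℂ → ℂ} (hf : Meromorphic f) {r : ℝ} (hr : 0 < r) :
    nevT f r = characteristic f ⊤ r := by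
  simp only [nevT, characteristic, Pi.add_apply, nevm_eq_proximity, nevN_eq_logCounting hf hr]



lemma nf_order_zero {f : ℂ → ℂ} (hNF : MeromorphicNFOn f Set.univ) {w : ℂ}
    (hw : meromorphicOrderAt f w = 0) : meromorphicTrailingCoeffAt f w = f w ∧ f w ≠ 0 := by
  have h1 := hNF (Set.mem_univ w)
  have h2 : AnalyticAt ℂ f w := h1.meromorphicOrderAt_nonneg_iff_analyticAt.1 hw.ge
  have h3 : f w ≠ 0 := h1.meromorphicOrderAt_eq_zero_iff.1 hw
  exact ⟨h2.meromorphicTrailingCoeffAt_of_ne_zero h3, h3⟩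

lemma poisson_jensen {f : ℂ → ℂ} (hNF : MeromorphicNFOn f Set.univ)
    (hord : ∀ z, meromorphicOrderAt f z ≠ ⊤) {R : ℝ} (hR : 0 < R)
    (hs : ∀ x ∈ sphere (0:ℂ) R, meromorphicOrderAt f x = 0) {w : ℂ} (hw : w ∈ ball (0:ℂ) R)
    (hw0 : meromorphicOrderAt f w = 0) :
    Real.log ‖f w‖ = Real.circleAverage
      ((Complex.re ∘ herglotzRieszKernel 0 w) • (fun z => Real.log ‖f z‖)) 0 R
      - ∑ᶠ i, (divisor f (ball 0 R) i) * Real.log ‖Complex.canonicalFactor R i w‖ := by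
  have hm : MeromorphicOn f (closedBall 0 R) := hNF.meromorphicOn.mono_set (Set.subset_univ _)
  obtain ⟨h, D⟩ := hm.exists_ecanonicalDecomp (fun u => hord u)
  have hsph : ∀ i, divisor f (sphere 0 R) i = 0 := by
    intro i
    by_cases hi : i ∈ sphere (0:ℂ) R
    · rw [divisor_apply (hm.mono_set sphere_subset_closedBall) hi, hs i hi]; rfl
    · exact Function.locallyFinsuppWithin.apply_eq_zero_of_notMem _ hi
  have hlog : ∀ z ∈ closedBall (0:ℂ) R, meromorphicOrderAt f z = 0 → Real.log ‖h z‖ =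
      (∑ᶠ i, (divisor f (ball 0 R) i) * Real.log ‖Complex.canonicalFactor R i z‖)
      + Real.log ‖f z‖ := by
    intro z hz hz0
    rw [D.log_norm_eq hz hz0 hR, (nf_order_zero hNF hz0).1]
    simp [hsph]
  have hharm : InnerProductSpace.HarmonicOnNhd (fun z => Real.log ‖h z‖) (closedBall 0 R) :=
    fun x hx => (D.analyticOnNhd x hx).harmonicAt_log_norm (D.ne_zero x hx)
  have hP := hharm.circleAverage_re_herglotzRieszKernel_smul hw
  rw [hlog w (ball_subset_closedBall hw) hw0] at hP
  rw [eq_sub_iff_add_eq, add_comm, ← hP]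
  apply Real.circleAverage_congr_sphere
  intro z hz
  rw [abs_of_pos hR] at hz
  simp only [Pi.smul_apply', smul_eq_mul]
  rw [hlog z (sphere_subset_closedBall hz) (hs z hz)]
  congr 1
  rw [finsum_eq_zero_of_forall_eq_zero, zero_add]
  intro i
  by_cases hi : i ∈ ball (0:ℂ) R
  · rw [Complex.norm_canonicalFactor_eval_circle_eq_one hi hz]; simp
  · rw [Function.locallyFinsuppWithin.apply_eq_zero_of_notMem _ hi]; simp

lemma kernel_diff {R s : ℝ} {z c ζ : ℂ} (hsR : s < R) (hz : ‖z‖ ≤ s) (hzc : ‖z + c‖ ≤ s)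
    (hζ : ‖ζ‖ = R) :
    |(herglotzRieszKernel 0 (z + c) ζ).re - (herglotzRieszKernel 0 z ζ).re|
      ≤ 2 * R * ‖c‖ / (R - s) ^ 2 := by
  have h1 : R - s ≤ ‖ζ - z‖ := by
    have := norm_sub_norm_le ζ z; linarith
  have h2 : R - s ≤ ‖ζ - (z + c)‖ := by
    have := norm_sub_norm_le ζ (z + c); linarith
  have h3 : 0 < R - s := by linarith
  have n1 : ζ - z ≠ 0 := by rw [← norm_pos_iff]; linarith
  have n2 : ζ - (z + c) ≠ 0 := by rw [← norm_pos_iff]; linarith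
  have he : herglotzRieszKernel 0 (z + c) ζ - herglotzRieszKernel 0 z ζ
      = 2 * ζ * c / ((ζ - (z + c)) * (ζ - z)) := by
    simp only [herglotzRieszKernel_def, sub_zero]
    field_simp
    ring
  rw [← Complex.sub_re, he]
  refine (Complex.abs_re_le_norm _).trans ?_
  rw [norm_div, norm_mul, norm_mul, norm_mul, hζ]
  have : 0 ≤ R := by rw [← hζ]; positivity
  simp only [Complex.norm_ofNat]
  rw [pow_two]
  gcongr

lemma log_diff_aux {a b d : ℝ} (ha : 0 < a) (hb : 0 < b) (hd : 0 ≤ d) (h1 : a ≤ b + d) {α : ℝ}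
    (hα : 0 < α) (hα1 : α < 1) :
    Real.log a - Real.log b ≤ d ^ α / α * b ^ (-α) := by
  rw [← Real.log_div ha.ne' hb.ne']
  have h2 : a / b ≤ 1 + d / b := by
    rw [div_le_iff₀ hb]; field_simp; linarith
  have h3 : Real.log (a / b) ≤ Real.log (1 + d / b) :=
    Real.log_le_log (by positivity) h2
  have h4 : Real.log (1 + d / b) = α⁻¹ * Real.log ((1 + d / b) ^ α) := by
    rw [Real.log_rpow (by positivity)]; field_simp
  have h5 : (1 + d / b) ^ α ≤ 1 + (d / b) ^ α := by
    simpa using Real.rpow_add_le_add_rpow (a := 1) (b := d / b) (by norm_num) (by positivity) hα.le hα1.le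
  have h6 : Real.log ((1 + d / b) ^ α) ≤ (d / b) ^ α := by
    have := Real.log_le_sub_one_of_pos (x := (1 + d / b) ^ α) (by positivity)
    linarith
  calc _ ≤ α⁻¹ * (d / b) ^ α := by
        rw [h4] at h3; exact h3.trans (by gcongr)
    _ = _ := by
        rw [Real.div_rpow hd hb.le, Real.rpow_neg hb.le]; field_simp

lemma canonical_diff {R s : ℝ} {z c i : ℂ} {α : ℝ} (hsR : s < R) (hz : ‖z‖ ≤ s) (hzc : ‖z + c‖ ≤ s)
    (hi : i ∈ ball (0:ℂ) R) (hα : 0 < α) (hα1 : α < 1) (n1 : z ≠ i) (n2 : z + c ≠ i) :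
    |Real.log ‖Complex.canonicalFactor R i (z + c)‖ - Real.log ‖Complex.canonicalFactor R i z‖|
      ≤ ‖c‖ ^ α / α * (‖z - i‖ ^ (-α) + ‖z - (i - c)‖ ^ (-α)) + ‖c‖ / (R - s) := by
  have hi' : ‖i‖ < R := by simpa using hi
  have hR : 0 < R := (norm_nonneg i).trans_lt hi'
  have hlow : ∀ w : ℂ, ‖w‖ ≤ s → R * (R - s) ≤ ‖(R:ℂ) ^ 2 - (starRingEnd ℂ) i * w‖ := by
    intro w hw
    have h1 := norm_sub_norm_le ((R:ℂ) ^ 2) ((starRingEnd ℂ) i * w)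
    rw [norm_mul, norm_pow, Complex.norm_conj, Complex.norm_real, Real.norm_eq_abs, sq_abs] at h1
    have : ‖i‖ * ‖w‖ ≤ R * s := by gcongr
    nlinarith
  have hpos : 0 < R * (R - s) := mul_pos hR (by linarith)
  have p1 := hpos.trans_le (hlow z hz)
  have p2 := hpos.trans_le (hlow _ hzc)
  have q1 : 0 < ‖z - i‖ := norm_pos_iff.2 (sub_ne_zero.2 n1)
  have q2 : 0 < ‖z + c - i‖ := norm_pos_iff.2 (sub_ne_zero.2 n2)
  have hl : ∀ w : ℂ, 0 < ‖(R:ℂ) ^ 2 - (starRingEnd ℂ) i * w‖ → 0 < ‖w - i‖ →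
      Real.log ‖Complex.canonicalFactor R i w‖ = Real.log ‖(R:ℂ) ^ 2 - (starRingEnd ℂ) i * w‖
        - (Real.log R + Real.log ‖w - i‖) := by
    intro w h1 h2
    rw [Complex.canonicalFactor_apply, norm_div, norm_mul, Complex.norm_real, Real.norm_eq_abs,
      abs_of_pos hR, Real.log_div h1.ne' (by positivity), Real.log_mul hR.ne' h2.ne']
  rw [hl z p1 q1, hl _ p2 q2]
  have hA : ∀ a b : ℝ, R * (R - s) ≤ b → 0 < a → a ≤ b + R * ‖c‖ →
      Real.log a - Real.log b ≤ ‖c‖ / (R - s) := by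
    intro a b hb ha hab
    have hb0 := hpos.trans_le hb
    rw [← Real.log_div ha.ne' hb0.ne']
    refine (Real.log_le_sub_one_of_pos (by positivity)).trans ?_
    rw [div_sub_one hb0.ne']
    calc (a - b) / b ≤ (R * ‖c‖) / b := by gcongr; linarith
      _ ≤ (R * ‖c‖) / (R * (R - s)) := by gcongr
      _ = _ := by field_simp
  have hconj : ‖(starRingEnd ℂ) i * c‖ ≤ R * ‖c‖ := by
    rw [norm_mul, Complex.norm_conj]; gcongr
  have t1 : ‖(R:ℂ) ^ 2 - (starRingEnd ℂ) i * (z + c)‖ ≤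
      ‖(R:ℂ) ^ 2 - (starRingEnd ℂ) i * z‖ + R * ‖c‖ := by
    have : (R:ℂ) ^ 2 - (starRingEnd ℂ) i * (z + c) =
      ((R:ℂ) ^ 2 - (starRingEnd ℂ) i * z) - (starRingEnd ℂ) i * c := by ring
    rw [this]
    exact (norm_sub_le _ _).trans (by gcongr)
  have t2 : ‖(R:ℂ) ^ 2 - (starRingEnd ℂ) i * z‖ ≤
      ‖(R:ℂ) ^ 2 - (starRingEnd ℂ) i * (z + c)‖ + R * ‖c‖ := by
    have : (R:ℂ) ^ 2 - (starRingEnd ℂ) i * z =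
      ((R:ℂ) ^ 2 - (starRingEnd ℂ) i * (z + c)) + (starRingEnd ℂ) i * c := by ring
    rw [this]
    exact (norm_add_le _ _).trans (by gcongr)
  have u1 := hA _ _ (hlow z hz) p2 t1
  have u2 := hA _ _ (hlow _ hzc) p1 t2
  have s1 : ‖z + c - i‖ ≤ ‖z - i‖ + ‖c‖ := by
    have : z + c - i = (z - i) + c := by ring
    rw [this]; exact norm_add_le _ _
  have s2 : ‖z - i‖ ≤ ‖z + c - i‖ + ‖c‖ := by
    have : z - i = (z + c - i) - c := by ring
    conv_lhs => rw [this]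
    exact norm_sub_le _ _
  have v1 := log_diff_aux q2 q1 (norm_nonneg c) s1 hα hα1
  have v2 := log_diff_aux q1 q2 (norm_nonneg c) s2 hα hα1
  have e : z - (i - c) = z + c - i := by ring
  rw [e]
  have w1 : 0 ≤ ‖c‖ ^ α / α * ‖z - i‖ ^ (-α) := by positivity
  have w2 : 0 ≤ ‖c‖ ^ α / α * ‖z + c - i‖ ^ (-α) := by positivity
  rw [mul_add (‖c‖ ^ α / α), abs_le]
  constructor <;> linarith



lemma sin_rpow_int {α : ℝ} (hα : 0 < α) (hα1 : α < 1) (a b : ℝ) :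
    IntervalIntegrable (fun θ => |Real.sin θ| ^ (-α)) volume a b := by
  have hper : Function.Periodic (fun θ => |Real.sin θ| ^ (-α)) Real.pi := by
    intro θ; simp [Real.sin_add_pi]
  have hmeas : Measurable (fun θ => |Real.sin θ| ^ (-α)) := by fun_prop
  have h1 : IntervalIntegrable (fun θ => |Real.sin θ| ^ (-α)) volume 0 (Real.pi / 2) := by
    have h0 : IntervalIntegrable (fun θ : ℝ => (2 / Real.pi) ^ (-α) * θ ^ (-α)) volume 0 (Real.pi / 2) :=
      (intervalIntegral.intervalIntegrable_rpow' (by linarith)).const_mul _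
    refine h0.mono_fun hmeas.aestronglyMeasurable ?_
    rw [Set.uIoc_of_le (by positivity)]
    filter_upwards [ae_restrict_mem measurableSet_Ioc] with θ hθ
    have hs := Real.mul_le_sin hθ.1.le hθ.2
    have hp : 0 < 2 / Real.pi * θ := mul_pos (by positivity) hθ.1
    rw [← Real.mul_rpow (by positivity) hθ.1.le, Real.norm_of_nonneg (by positivity),
      Real.norm_of_nonneg (by positivity), abs_of_pos (by linarith)]
    exact Real.rpow_le_rpow_of_nonpos hp hs (by linarith)
  have h2 : IntervalIntegrable (fun θ => |Real.sin θ| ^ (-α)) volume (Real.pi / 2) Real.pi := by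
    have := h1.comp_sub_left Real.pi
    simp only [Real.sin_pi_sub, sub_zero] at this
    have e : Real.pi - Real.pi / 2 = Real.pi / 2 := by ring
    rw [e] at this
    exact this.symm
  have h3 := h1.trans h2
  refine hper.intervalIntegrable Real.pi_pos.ne' (t := 0) (by simpa using h3) a b

lemma circle_sub_ge (a : ℂ) {r : ℝ} (hr : 0 < r) (θ : ℝ) :
    r * |Real.sin (θ - a.arg)| ≤ ‖circleMap 0 r θ - a‖ := by
  have h1 : circleMap 0 r θ - a
      = Complex.exp (a.arg * Complex.I) * (circleMap 0 r (θ - a.arg) - (‖a‖ : ℂ)) := by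
    conv_lhs => rw [← Complex.norm_mul_exp_arg_mul_I a]
    simp only [circleMap, zero_add, mul_sub]
    have : Complex.exp (θ * Complex.I) = Complex.exp (a.arg * Complex.I) *
        Complex.exp (((θ - a.arg : ℝ) : ℂ) * Complex.I) := by
      rw [← Complex.exp_add]; congr 1; push_cast; ring
    rw [this]; ring
  rw [h1, norm_mul, Complex.norm_exp_ofReal_mul_I, one_mul]
  have h2 : (circleMap 0 r (θ - a.arg) - (‖a‖ : ℂ)).im = r * Real.sin (θ - a.arg) := by
    simp only [circleMap, zero_add, Complex.sub_im, Complex.ofReal_im, sub_zero]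
    rw [Complex.im_ofReal_mul, Complex.exp_ofReal_mul_I_im]
  have h3 := Complex.abs_im_le_norm (circleMap 0 r (θ - a.arg) - (‖a‖ : ℂ))
  rwa [h2, abs_mul, abs_of_pos hr] at h3

lemma circle_rpow {α : ℝ} (hα : 0 < α) (hα1 : α < 1) :
    ∃ K : ℝ, 0 ≤ K ∧ ∀ (a : ℂ) (r : ℝ), 0 < r →
      CircleIntegrable (fun z => ‖z - a‖ ^ (-α)) 0 r ∧
      Real.circleAverage (fun z => ‖z - a‖ ^ (-α)) 0 r ≤ K * r ^ (-α) := by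
  refine ⟨(2 * Real.pi)⁻¹ * ∫ θ in (0:ℝ)..(2 * Real.pi), |Real.sin θ| ^ (-α), ?_, ?_⟩
  · have : 0 ≤ ∫ θ in (0:ℝ)..(2 * Real.pi), |Real.sin θ| ^ (-α) :=
      intervalIntegral.integral_nonneg (by positivity) (fun θ _ => by positivity)
    positivity
  intro a r hr
  have hcount : (∀ᵐ θ : ℝ, Real.sin (θ - a.arg) ≠ 0) := by
    rw [ae_iff]
    refine Set.Countable.measure_zero ?_ _
    refine (Set.countable_range (fun n : ℤ => (n:ℝ) * Real.pi + a.arg)).mono ?_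
    intro θ hθ
    simp only [ne_eq, not_not, Set.mem_ofPred_eq] at hθ
    obtain ⟨n, hn⟩ := Real.sin_eq_zero_iff.1 hθ
    exact ⟨n, by simp only; linarith⟩
  have hle : ∀ᵐ θ : ℝ, ‖circleMap 0 r θ - a‖ ^ (-α)
      ≤ r ^ (-α) * |Real.sin (θ - a.arg)| ^ (-α) := by
    filter_upwards [hcount] with θ hθ
    rw [← Real.mul_rpow hr.le (abs_nonneg _)]
    have : 0 < |Real.sin (θ - a.arg)| := abs_pos.2 hθ
    exact Real.rpow_le_rpow_of_nonpos (by positivity) (circle_sub_ge a hr θ) (by linarith)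
  have hint : IntervalIntegrable (fun θ => r ^ (-α) * |Real.sin (θ - a.arg)| ^ (-α)) volume
      0 (2 * Real.pi) := by
    have := (sin_rpow_int hα hα1 (0 - a.arg) (2 * Real.pi - a.arg)).comp_sub_right a.arg
    simp only [sub_add_cancel] at this
    exact this.const_mul _
  have hci : CircleIntegrable (fun z => ‖z - a‖ ^ (-α)) 0 r := by
    refine hint.mono_fun ?_ ?_
    · exact (by fun_prop : Measurable (fun θ => ‖circleMap 0 r θ - a‖ ^ (-α))).aestronglyMeasurable
    · refine ae_restrict_of_ae ?_
      filter_upwards [hle] with θ hθ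
      rw [Real.norm_of_nonneg (by positivity), Real.norm_of_nonneg (by positivity)]
      exact hθ
  refine ⟨hci, ?_⟩
  unfold Real.circleAverage
  rw [smul_eq_mul, mul_assoc]
  refine mul_le_mul_of_nonneg_left ?_ (by positivity)
  calc _ ≤ ∫ θ in (0:ℝ)..(2 * Real.pi), r ^ (-α) * |Real.sin (θ - a.arg)| ^ (-α) := by
        exact intervalIntegral.integral_mono_ae (by positivity) hci hint hle
    _ = _ := by
        rw [intervalIntegral.integral_const_mul, mul_comm]
        congr 1
        rw [intervalIntegral.integral_comp_sub_right (fun θ => |Real.sin θ| ^ (-α))]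
        have hper : Function.Periodic (fun θ => |Real.sin θ| ^ (-α)) (2 * Real.pi) := by
          intro θ; simp [Real.sin_add_two_pi]
        have := hper.intervalIntegral_add_eq (0 - a.arg) 0
        rw [zero_add] at this
        rw [← this]; congr 1; ring



lemma avg_abs_log {f : ℂ → ℂ} (hf : Meromorphic f) (R : ℝ) :
    Real.circleAverage |fun z => Real.log ‖f z‖| 0 R
      = proximity f ⊤ R + proximity f⁻¹ ⊤ R := by
  simp only [proximity, ↓reduceDIte, Pi.inv_apply, norm_inv]
  rw [← Real.circleAverage_add]
  · congr 1
    ext z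
    simp only [Pi.abs_apply, Pi.add_apply, Real.posLog_apply, Real.log_inv]
    rcases le_total 0 (Real.log ‖f z‖) with h | h
    · rw [abs_of_nonneg h, max_eq_right h, max_eq_left (by linarith), add_zero]
    · rw [abs_of_nonpos h, max_eq_left h, max_eq_right (by linarith), zero_add]
  · apply hf.meromorphicOn.circleIntegrable_posLog_norm
  · simp_rw [← norm_inv]
    apply hf.inv.meromorphicOn.circleIntegrable_posLog_norm

lemma avg_kernel_diff {u : ℂ → ℝ} {R s : ℝ} {z c : ℂ} (hR : 0 < R) (hu : CircleIntegrable u 0 R)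
    (hsR : s < R) (hz : ‖z‖ ≤ s) (hzc : ‖z + c‖ ≤ s) :
    Real.circleAverage ((Complex.re ∘ herglotzRieszKernel 0 (z + c)) • u) 0 R
      - Real.circleAverage ((Complex.re ∘ herglotzRieszKernel 0 z) • u) 0 R
      ≤ 2 * R * ‖c‖ / (R - s) ^ 2 * Real.circleAverage |u| 0 R := by
  have hi : ∀ w : ℂ, ‖w‖ ≤ s →
      CircleIntegrable ((Complex.re ∘ herglotzRieszKernel 0 w) • u) 0 R := by
    intro w hw
    refine hu.continuousOn_smul ?_
    refine Complex.continuous_re.comp_continuousOn ?_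
    exact continuousOn_herglotzRieszKernel_sphere (by simp; linarith)
  rw [← Real.circleAverage_sub (hi _ hzc) (hi _ hz), ← smul_eq_mul (2 * R * ‖c‖ / (R - s) ^ 2),
    ← Real.circleAverage_smul]
  refine Real.circleAverage_mono ((hi _ hzc).sub (hi _ hz)) (hu.abs.const_smul) ?_
  intro ζ hζ
  rw [abs_of_pos hR, mem_sphere_zero_iff_norm] at hζ
  simp only [Pi.sub_apply, Pi.mul_apply, Function.comp_apply, smul_eq_mul, Pi.smul_apply,
    Pi.abs_apply]
  rw [← sub_mul]
  refine (le_abs_self _).trans ?_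
  rw [abs_mul]
  exact mul_le_mul_of_nonneg_right (kernel_diff hsR hz hzc hζ) (abs_nonneg _)

lemma count_bound {f : ℂ → ℂ} (hf : Meromorphic f) {R R' : ℝ} (hR : 1 ≤ R) (hRR : R ≤ R')
    (F : Finset ℂ) (hF : ∀ i ∈ F, i ∈ ball (0:ℂ) R) :
    (∑ i ∈ F, |(divisor f (ball 0 R) i : ℝ)|) * Real.log (R' / R)
      ≤ logCounting f ⊤ R' + logCounting f 0 R' := by
  classical
  set D := divisor f Set.univ with hD
  have hev : ∀ i ∈ F, divisor f (ball 0 R) i = D i := by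
    intro i hi
    rw [hD, divisor_apply (hf.meromorphicOn) (hF i hi), divisor_apply hf.meromorphicOn (Set.mem_univ i)]
  let S : Function.locallyFinsupp ℂ ℤ :=
    ∑ i ∈ F, Function.locallyFinsuppWithin.single i |D i|
  have hS : S ≤ D⁻ + D⁺ := by
    rw [Function.locallyFinsuppWithin.le_def]
    intro x
    simp only [S, Function.locallyFinsuppWithin.coe_sum, Finset.sum_apply,
      Function.locallyFinsuppWithin.single_apply, Finset.sum_ite_eq,
      Function.locallyFinsuppWithin.coe_add, Pi.add_apply,
      Function.locallyFinsuppWithin.posPart_apply, Function.locallyFinsuppWithin.negPart_apply]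
    have : (D x)⁻ + (D x)⁺ = |D x| := by rw [add_comm, posPart_add_negPart]
    rw [this]
    split_ifs
    · exact le_rfl
    · exact abs_nonneg _
  have h1 := Function.locallyFinsuppWithin.logCounting_le hS (hR.trans hRR)
  rw [map_add, Pi.add_apply] at h1
  rw [logCounting_top, logCounting_zero]
  refine le_trans ?_ h1
  simp only [S, map_sum, Finset.sum_apply]
  rw [Finset.sum_mul]
  refine Finset.sum_le_sum fun i hi => ?_
  have hiR : ‖i‖ < R := by simpa using hF i hi
  rw [Function.locallyFinsuppWithin.logCounting_single_eq_log_sub_const (by linarith), hev i hi,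
    Int.cast_abs, Real.log_div (by linarith) (by linarith)]
  refine mul_le_mul_of_nonneg_left ?_ (abs_nonneg _)
  have : Real.log ‖i‖ ≤ Real.log R := by
    rcases eq_or_ne i 0 with rfl | h
    · simpa using Real.log_nonneg hR
    · exact Real.log_le_log (norm_pos_iff.2 h) hiR.le
  linarith



lemma codisc_shift (c : ℂ) {P : ℂ → Prop} (hP : ∀ᶠ z in codiscrete ℂ, P z) :
    ∀ᶠ z in codiscrete ℂ, P (z + c) := by
  simp only [Filter.Eventually, mem_codiscreteWithin_iff_forall_mem_nhdsNE, Set.compl_univ,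
    Set.union_empty, codiscrete] at hP ⊢
  intro x _
  have ht : Tendsto (fun z : ℂ => z + c) (𝓝[≠] x) (𝓝[≠] (x + c)) := by
    refine tendsto_nhdsWithin_of_tendsto_nhds_of_eventually_within _ ?_ ?_
    · exact ((continuous_add_const c).tendsto x).mono_left nhdsWithin_le_nhds
    · filter_upwards [self_mem_nhdsWithin] with z hz
      simpa using hz
  exact ht (hP (x + c) trivial)

lemma codisc_order {f : ℂ → ℂ} (hf : Meromorphic f)
    (hord : ∀ z, meromorphicOrderAt f z ≠ ⊤) :
    ∀ᶠ z in codiscrete ℂ, meromorphicOrderAt f z = 0 := by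
  have := (hf.meromorphicOn (s := Set.univ)).codiscreteWithin_setOfPred_meromorphicOrderAt_eq_zero_or_top
    (fun u _ => hord u)
  filter_upwards [this] with z hz
  exact hz.2.resolve_right (hord z)

lemma circleAverage_mono_codisc {r : ℝ} (hr : 0 < r) {u v : ℂ → ℝ} (hu : CircleIntegrable u 0 r)
    (hv : CircleIntegrable v 0 r) (h : ∀ᶠ z in codiscrete ℂ, ‖z‖ = r → u z ≤ v z) :
    Real.circleAverage u 0 r ≤ Real.circleAverage v 0 r := by
  unfold Real.circleAverage
  rw [smul_eq_mul, smul_eq_mul]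
  refine mul_le_mul_of_nonneg_left ?_ (by positivity)
  refine intervalIntegral.integral_mono_ae_restrict (by positivity) hu hv ?_
  have h1 : ∀ᶠ z in codiscreteWithin (sphere (0:ℂ) |r|), u z ≤ v z := by
    filter_upwards [codiscreteWithin_mono (Set.subset_univ _) h,
      self_mem_codiscreteWithin (sphere (0:ℂ) |r|)] with z hz hz2
    refine hz ?_
    rwa [abs_of_pos hr, mem_sphere_zero_iff_norm] at hz2
  have h2 := circleMap_preimage_codiscrete hr.ne' h1
  exact ae_restrict_le_codiscreteWithin measurableSet_Icc (codiscreteWithin_mono (by tauto) h2)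

lemma key {f : ℂ → ℂ} (hNF : MeromorphicNFOn f Set.univ)
    (hord : ∀ z, meromorphicOrderAt f z ≠ ⊤) (c : ℂ) {α : ℝ} (hα : 0 < α) (hα1 : α < 1) :
    ∃ K A : ℝ, 0 ≤ K ∧ 0 ≤ A ∧ ∀ r R R' : ℝ, 1 ≤ r → r + ‖c‖ < R → R < R' →
      (∀ x ∈ sphere (0:ℂ) R, meromorphicOrderAt f x = 0) →
      proximity (fun z => f (z + c) / f z) ⊤ r ≤ (2 * characteristic f ⊤ R' + A) *
        (2 * R * ‖c‖ / (R - (r + ‖c‖)) ^ 2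
          + (K * r ^ (-α) + ‖c‖ / (R - (r + ‖c‖))) / Real.log (R' / R)) := by
  obtain ⟨K0, hK0, hK⟩ := circle_rpow hα hα1
  have hf : Meromorphic f := fun z => (hNF (Set.mem_univ z)).meromorphicAt
  refine ⟨‖c‖ ^ α / α * (K0 + K0), |Real.log ‖meromorphicTrailingCoeffAt f 0‖|, by positivity,
    by positivity, ?_⟩
  intro r R R' hr hsR hRR hs
  set s := r + ‖c‖ with hsdef
  have hc0 := norm_nonneg c
  have hRs : 0 < R - s := by linarith
  have hR1 : 1 ≤ R := by linarith
  have hR0 : 0 < R := by linarith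
  have hlog : 0 < Real.log (R' / R) := Real.log_pos (by rw [one_lt_div hR0]; exact hRR)
  have hfin : (divisor f (ball 0 R)).support.Finite :=
    (hf.meromorphicOn (s := closedBall 0 R)).divisor_ball_support_finite
  set F := hfin.toFinset with hF
  have hFb : ∀ i ∈ F, i ∈ ball (0:ℂ) R := by
    intro i hi
    by_contra hn
    have := Function.locallyFinsuppWithin.apply_eq_zero_of_notMem (divisor f (ball 0 R)) hn
    simp [F, this] at hi
  set T := characteristic f ⊤ with hT
  set A := |Real.log ‖meromorphicTrailingCoeffAt f 0‖| with hA
  set L := Real.circleAverage |fun z => Real.log ‖f z‖| 0 R with hL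
  -- first main theorem
  have hfmt : ∀ x : ℝ, 0 < x → characteristic f⁻¹ ⊤ x ≤ T x + A := by
    intro x hx
    have := characteristic_sub_characteristic_inv_of_ne_zero hf hx.ne'
    have h2 := neg_abs_le (Real.log ‖meromorphicTrailingCoeffAt f 0‖)
    rw [← hA, ← this] at h2
    linarith
  have hTm : T R ≤ T R' := characteristic_monotoneOn hf hR0 (hR0.trans hRR) hRR.le
  have hLle : L ≤ 2 * T R' + A := by
    rw [hL, avg_abs_log hf]
    have h1 := hfmt R hR0
    have h2 : proximity f ⊤ R ≤ T R := by
      have := logCounting_nonneg (f := f) (e := ⊤) hR1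
      simp only [hT, characteristic, Pi.add_apply]; linarith
    have h3 : proximity f⁻¹ ⊤ R ≤ characteristic f⁻¹ ⊤ R := by
      have := logCounting_nonneg (f := f⁻¹) (e := ⊤) hR1
      simp only [characteristic, Pi.add_apply]; linarith
    linarith
  have hn : (∑ i ∈ F, |(divisor f (ball 0 R) i : ℝ)|) ≤ (2 * T R' + A) / Real.log (R' / R) := by
    rw [le_div_iff₀ hlog]
    refine (count_bound hf hR1 hRR.le F hFb).trans ?_
    have h1 := hfmt R' (by linarith)
    have h2 : logCounting f ⊤ R' ≤ T R' := by
      have := proximity_nonneg (f := f) (a := ⊤) R'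
      simp only [hT, characteristic, Pi.add_apply]; simp at this; linarith
    have h3 : logCounting f 0 R' ≤ characteristic f⁻¹ ⊤ R' := by
      have := proximity_nonneg (f := f⁻¹) (a := ⊤) R'
      simp only [characteristic, Pi.add_apply, logCounting_inv]; simp at this; linarith
    linarith
  -- pointwise bound
  set B : ℂ → ℝ := fun z => 2 * R * ‖c‖ / (R - s) ^ 2 * L
    + ∑ i ∈ F, |(divisor f (ball 0 R) i : ℝ)| *
      (‖c‖ ^ α / α * (‖z - i‖ ^ (-α) + ‖z - (i - c)‖ ^ (-α)) + ‖c‖ / (R - s)) with hB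
  have hL0 : 0 ≤ L := Real.circleAverage_nonneg_of_nonneg (fun x _ => abs_nonneg _)
  have hlogint : CircleIntegrable (fun z => Real.log ‖f z‖) 0 R :=
    MeromorphicOn.circleIntegrable_log_norm hf.meromorphicOn
  have hpt : ∀ z : ℂ, ‖z‖ = r → meromorphicOrderAt f z = 0 → meromorphicOrderAt f (z + c) = 0 →
      Real.posLog ‖f (z + c) / f z‖ ≤ B z := by
    intro z hzr hz0 hzc0
    have hB0 : 0 ≤ B z := by
      simp only [hB]; positivity
    have hzs : ‖z‖ ≤ s := by linarith
    have hzcs : ‖z + c‖ ≤ s := by have := norm_add_le z c; linarith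
    rw [Real.posLog_apply]
    refine max_le hB0 ?_
    rw [norm_div, Real.log_div (norm_ne_zero_iff.2 (nf_order_zero hNF hzc0).2)
      (norm_ne_zero_iff.2 (nf_order_zero hNF hz0).2),
      poisson_jensen hNF hord hR0 hs (by simp; linarith) hz0,
      poisson_jensen hNF hord hR0 hs (by simp; linarith) hzc0]
    have hk := avg_kernel_diff hR0 hlogint hsR hzs hzcs
    have hsum : ∀ w : ℂ, ∑ᶠ i, (divisor f (ball 0 R) i : ℝ) * Real.log ‖Complex.canonicalFactor R i w‖
        = ∑ i ∈ F, (divisor f (ball 0 R) i : ℝ) * Real.log ‖Complex.canonicalFactor R i w‖ := by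
      intro w
      refine finsum_eq_sum_of_support_subset _ ?_
      intro i hi
      simp only [F, Set.Finite.coe_toFinset]
      simp only [Function.mem_support] at hi ⊢
      intro h0; apply hi; rw [h0]; simp
    rw [hsum, hsum]
    have hne : ∀ i ∈ F, ∀ w, meromorphicOrderAt f w = 0 → w ≠ i := by
      rintro i hi w hw rfl
      have : divisor f (ball 0 R) w = 0 := by
        rw [divisor_apply hf.meromorphicOn (hFb w hi), hw]; rfl
      simp [F, this] at hi
    have hcan : (∑ i ∈ F, (divisor f (ball 0 R) i : ℝ) * Real.log ‖Complex.canonicalFactor R i z‖)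
        - (∑ i ∈ F, (divisor f (ball 0 R) i : ℝ) * Real.log ‖Complex.canonicalFactor R i (z + c)‖)
        ≤ ∑ i ∈ F, |(divisor f (ball 0 R) i : ℝ)| *
      (‖c‖ ^ α / α * (‖z - i‖ ^ (-α) + ‖z - (i - c)‖ ^ (-α)) + ‖c‖ / (R - s)) := by
      rw [← Finset.sum_sub_distrib]
      refine Finset.sum_le_sum fun i hi => ?_
      rw [← mul_sub]
      refine (le_abs_self _).trans ?_
      rw [abs_mul, abs_sub_comm]
      exact mul_le_mul_of_nonneg_left (canonical_diff hsR hzs hzcs (hFb i hi) hα hα1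
        (hne i hi z hz0) (hne i hi _ hzc0)) (abs_nonneg _)
    simp only [hB]
    linarith
  have hmq : Meromorphic (fun z => f (z + c) / f z) := by
    have h1 : Meromorphic (fun z => f (z + c)) := by
      intro z
      exact (hf (z + c)).comp_analyticAt (g := fun z => z + c) (by fun_prop)
    exact h1.div hf
  have hterm : ∀ i, CircleIntegrable (fun z : ℂ => |(divisor f (ball 0 R) i : ℝ)| *
      (‖c‖ ^ α / α * (‖z - i‖ ^ (-α) + ‖z - (i - c)‖ ^ (-α)) + ‖c‖ / (R - s))) 0 r := by
    intro i
    have h1 := (hK i r (by linarith)).1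
    have h2 := (hK (i - c) r (by linarith)).1
    exact (((h1.add h2).const_mul _).add (circleIntegrable_const _ 0 r)).const_mul _
  have havg : ∀ i, Real.circleAverage (fun z : ℂ => |(divisor f (ball 0 R) i : ℝ)| *
      (‖c‖ ^ α / α * (‖z - i‖ ^ (-α) + ‖z - (i - c)‖ ^ (-α)) + ‖c‖ / (R - s))) 0 r
      ≤ |(divisor f (ball 0 R) i : ℝ)| *
        (‖c‖ ^ α / α * (K0 + K0) * r ^ (-α) + ‖c‖ / (R - s)) := by
    intro i
    have h1 := hK i r (by linarith)
    have h2 := hK (i - c) r (by linarith)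
    have e := Real.circleAverage_fun_smul (a := |(divisor f (ball 0 R) i : ℝ)|) (c := 0) (R := r)
      (f := fun z : ℂ => ‖c‖ ^ α / α * (‖z - i‖ ^ (-α) + ‖z - (i - c)‖ ^ (-α)) + ‖c‖ / (R - s))
    simp only [smul_eq_mul] at e
    rw [e]
    refine mul_le_mul_of_nonneg_left ?_ (abs_nonneg _)
    have hci : CircleIntegrable (fun z : ℂ =>
        ‖c‖ ^ α / α * (‖z - i‖ ^ (-α) + ‖z - (i - c)‖ ^ (-α))) 0 r :=
      (h1.1.add h2.1).const_mul _
    rw [Real.circleAverage_fun_add hci (circleIntegrable_const _ _ _),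
      Real.circleAverage_const]
    have e2 := Real.circleAverage_fun_smul (a := ‖c‖ ^ α / α) (c := 0) (R := r)
      (f := fun z : ℂ => ‖z - i‖ ^ (-α) + ‖z - (i - c)‖ ^ (-α))
    simp only [smul_eq_mul] at e2
    rw [e2, Real.circleAverage_fun_add h1.1 h2.1, mul_assoc, add_mul]
    have : (0:ℝ) ≤ ‖c‖ ^ α / α := by positivity
    have := mul_le_mul_of_nonneg_left (add_le_add h1.2 h2.2) this
    linarith
  have hBint : CircleIntegrable B 0 r :=
    (circleIntegrable_const _ _ _).add (CircleIntegrable.fun_sum F (fun i _ => hterm i))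
  have hr0 : r ≠ 0 := by linarith
  have hm1 : proximity (fun z => f (z + c) / f z) ⊤ r ≤ Real.circleAverage B 0 r := by
    simp only [proximity, ↓reduceDIte]
    have hpl : CircleIntegrable (fun z => Real.posLog ‖f (z + c) / f z‖) 0 r :=
      MeromorphicOn.circleIntegrable_posLog_norm hmq.meromorphicOn
    refine circleAverage_mono_codisc (by linarith) hpl hBint ?_
    have h0 := codisc_order hf hord
    filter_upwards [h0, codisc_shift c h0] with z h1 h2 h3
    exact hpt z h3 h1 h2
  refine hm1.trans ?_
  rw [hB, Real.circleAverage_fun_add (circleIntegrable_const _ _ _)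
    (CircleIntegrable.fun_sum F (fun i _ => hterm i)), Real.circleAverage_const,
    Real.circleAverage_fun_sum (fun i _ => hterm i)]
  have h4 := Finset.sum_le_sum (fun i (_ : i ∈ F) => havg i)
  rw [← Finset.sum_mul] at h4
  have hX : 0 ≤ ‖c‖ ^ α / α * (K0 + K0) * r ^ (-α) + ‖c‖ / (R - s) := by positivity
  have h5 := mul_le_mul_of_nonneg_right hn hX
  have h6 : 2 * R * ‖c‖ / (R - s) ^ 2 * L ≤ 2 * R * ‖c‖ / (R - s) ^ 2 * (2 * T R' + A) :=
    mul_le_mul_of_nonneg_left hLle (by positivity)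
  calc _ ≤ 2 * R * ‖c‖ / (R - s) ^ 2 * (2 * T R' + A) + (2 * T R' + A) / Real.log (R' / R) *
        (‖c‖ ^ α / α * (K0 + K0) * r ^ (-α) + ‖c‖ / (R - s)) := by linarith
    _ = _ := by ring



lemma generic_radius {f : ℂ → ℂ} (hf : Meromorphic f)
    (hord : ∀ z, meromorphicOrderAt f z ≠ ⊤) {a b : ℝ} (hab : a < b) :
    ∃ R, a < R ∧ R < b ∧ ∀ x ∈ sphere (0:ℂ) R, meromorphicOrderAt f x = 0 := by
  have hm : MeromorphicOn f (closedBall 0 b) := hf.meromorphicOn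
  have hfin : (divisor f (closedBall 0 b)).support.Finite :=
    (divisor f (closedBall 0 b)).finiteSupport (isCompact_closedBall 0 b)
  obtain ⟨R, hR, hR2⟩ := (Set.Ioo_infinite hab).exists_notMem_finset (hfin.image norm).toFinset
  refine ⟨R, hR.1, hR.2, fun x hx => ?_⟩
  rw [mem_sphere_zero_iff_norm] at hx
  by_contra h0
  apply hR2
  simp only [Set.Finite.mem_toFinset, Set.mem_image, Function.mem_support]
  refine ⟨x, ?_, hx⟩
  rw [divisor_apply hm (by simpa [hx] using hR.2.le)]
  intro h
  rcases (WithTop.untop₀_eq_zero.1 h) with h | h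
  · exact h0 h
  · exact hord x h

lemma key2 {f : ℂ → ℂ} (hNF : MeromorphicNFOn f Set.univ)
    (hord : ∀ z, meromorphicOrderAt f z ≠ ⊤) (c : ℂ) {α : ℝ} (hα : 0 < α) (hα1 : α < 1) :
    ∃ K A : ℝ, 0 ≤ K ∧ 0 ≤ A ∧ ∀ r h : ℝ, 1 ≤ r → 0 < h →
      proximity (fun z => f (z + c) / f z) ⊤ r ≤ (2 * characteristic f ⊤ (r + h + ‖c‖) + A) *
        ((r + h + ‖c‖) / h * (2 * K * r ^ (-α) + 24 * ‖c‖ / h)) := by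
  obtain ⟨K, A, hK, hA, H⟩ := key hNF hord c hα hα1
  have hf : Meromorphic f := fun z => (hNF (Set.mem_univ z)).meromorphicAt
  refine ⟨K, A, hK, hA, fun r h hr hh => ?_⟩
  set s := r + ‖c‖ with hs
  have hc0 := norm_nonneg c
  obtain ⟨R, hR1, hR2, hR3⟩ := generic_radius hf hord (a := s + h / 3) (b := s + h / 2) (by linarith)
  have H1 := H r R (s + h) hr (by linarith) (by linarith) hR3
  have e : r + h + ‖c‖ = s + h := by rw [hs]; ring
  rw [e]
  have hT := characteristic_nonneg (f := f) (a := ⊤) (r := s + h) (by linarith)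
  refine H1.trans (mul_le_mul_of_nonneg_left ?_ (by linarith))
  have hRs : h / 3 ≤ R - s := by linarith
  have hR0 : 0 < R := by linarith
  have b1 : 2 * R * ‖c‖ / (R - s) ^ 2 ≤ 2 * (s + h) * ‖c‖ / (h / 3) ^ 2 := by
    gcongr; linarith
  have b2 : ‖c‖ / (R - s) ≤ ‖c‖ / (h / 3) := by gcongr
  have b3 : (h / 2) / (s + h) ≤ Real.log ((s + h) / R) := by
    have := Real.one_sub_inv_le_log_of_pos (x := (s + h) / R) (by apply div_pos <;> linarith)
    refine le_trans ?_ this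
    rw [inv_div, one_sub_div (by linarith)]
    gcongr; linarith
  have b4 : (K * r ^ (-α) + ‖c‖ / (R - s)) / Real.log ((s + h) / R)
      ≤ (K * r ^ (-α) + ‖c‖ / (h / 3)) / ((h / 2) / (s + h)) := by
    have : 0 < (h / 2) / (s + h) := by apply div_pos <;> linarith
    have : 0 ≤ r ^ (-α) := by positivity
    gcongr
  refine (add_le_add b1 b4).trans (le_of_eq ?_)
  have : s + h ≠ 0 := by linarith
  field_simp
  ring

lemma borel_growth {S : ℝ → ℝ} {r0 κ : ℝ} (hr0 : 1 ≤ r0) (hκ : 0 < κ)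
    (hS : MonotoneOn S (Set.Ici r0)) (hS1 : ∀ r, r0 ≤ r → 1 ≤ S r) :
    FinLogMeasure {r | r0 ≤ r ∧ 2 * S r < S (r + r / S r ^ κ)} := by
  refine ⟨fun r hr => by have := hr.1; simp only [Set.mem_Ioi]; linarith, ?_⟩
  set F := {r | r0 ≤ r ∧ 2 * S r < S (r + r / S r ^ κ)} with hF
  set G : ℕ → Set ℝ := fun n => {r | r ∈ F ∧ 2 ^ n ≤ S r ∧ S r < 2 ^ (n + 1)} with hG
  set q : ℝ := (2 ^ κ)⁻¹ with hq
  have h2κ : 1 < (2:ℝ) ^ κ := Real.one_lt_rpow (by norm_num) hκ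
  have hq0 : 0 < q := by positivity
  have hq1 : q < 1 := inv_lt_one_of_one_lt₀ h2κ
  have hsub : F ⊆ ⋃ n, G n := by
    intro r hr
    obtain ⟨n, h1, h2⟩ := exists_nat_pow_near (hS1 r hr.1) (by norm_num : (1:ℝ) < 2)
    exact Set.mem_iUnion.2 ⟨n, hr, h1, h2⟩
  have hbd : ∀ n, ∫⁻ r in G n, ENNReal.ofReal r⁻¹ ≤ ENNReal.ofReal (q ^ n) := by
    intro n
    rcases Set.eq_empty_or_nonempty (G n) with he | hne
    · simp [he]
    have hlow : ∀ x ∈ G n, r0 ≤ x := fun x hx => hx.1.1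
    have hbb : BddBelow (G n) := ⟨r0, hlow⟩
    set a := sInf (G n) with ha
    have ha0 : r0 ≤ a := le_csInf hne hlow
    have ha1 : 0 < a := by linarith
    have hxr : ∀ x ∈ G n, ∀ r ∈ G n, r ≤ x * (1 + q ^ n) := by
      intro x hx r hr
      have hx0 : 0 < x := by linarith [hlow x hx]
      have hSx : 0 < S x := by linarith [hS1 x hx.1.1]
      have h1 : r ≤ x + x / S x ^ κ := by
        by_contra hlt
        push Not at hlt
        have hp : 0 ≤ x / S x ^ κ := by positivity
        have := hS (a := x + x / S x ^ κ) (b := r) (by simp only [Set.mem_Ici]; linarith [hlow x hx])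
          (hlow r hr) hlt.le
        have h3 := hx.1.2
        have h4 := hx.2.1
        have h5 := hr.2.2
        rw [pow_succ] at h5
        linarith
      have h2 : x / S x ^ κ ≤ x * q ^ n := by
        rw [div_eq_mul_inv]
        refine mul_le_mul_of_nonneg_left ?_ hx0.le
        rw [hq, inv_pow]
        refine inv_anti₀ (by positivity) ?_
        calc ((2:ℝ) ^ κ) ^ n = ((2:ℝ) ^ n) ^ κ := by
              rw [← Real.rpow_natCast, ← Real.rpow_natCast, ← Real.rpow_mul (by norm_num),
                ← Real.rpow_mul (by norm_num), mul_comm]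
          _ ≤ S x ^ κ := Real.rpow_le_rpow (by positivity) hx.2.1 hκ.le
      linarith
    have hq' : 0 < 1 + q ^ n := by positivity
    have hsub2 : G n ⊆ Set.Icc a (a * (1 + q ^ n)) := by
      intro r hr
      refine ⟨csInf_le hbb hr, ?_⟩
      rw [← div_le_iff₀ hq']
      exact le_csInf hne fun x hx => by rw [div_le_iff₀ hq']; exact hxr x hx r hr
    calc ∫⁻ r in G n, ENNReal.ofReal r⁻¹
        ≤ ∫⁻ r in Set.Icc a (a * (1 + q ^ n)), ENNReal.ofReal r⁻¹ := lintegral_mono_set hsub2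
      _ ≤ ∫⁻ r in Set.Icc a (a * (1 + q ^ n)), ENNReal.ofReal a⁻¹ := by
          refine setLIntegral_mono' measurableSet_Icc fun x hx => ?_
          exact ENNReal.ofReal_le_ofReal (inv_anti₀ ha1 hx.1)
      _ = ENNReal.ofReal (q ^ n) := by
          rw [setLIntegral_const, Real.volume_Icc, ← ENNReal.ofReal_mul (by positivity)]
          congr 1
          field_simp
          ring
  calc ∫⁻ r in F, ENNReal.ofReal r⁻¹ ≤ ∫⁻ r in ⋃ n, G n, ENNReal.ofReal r⁻¹ :=
        lintegral_mono_set hsub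
    _ ≤ ∑' n, ∫⁻ r in G n, ENNReal.ofReal r⁻¹ := lintegral_iUnion_le _ _
    _ ≤ ∑' n, ENNReal.ofReal (q ^ n) := ENNReal.tsum_le_tsum hbd
    _ < ⊤ := (summable_geometric_of_lt_one hq0.le hq1).tsum_ofReal_lt_top



lemma finLog_empty : FinLogMeasure ∅ := ⟨Set.empty_subset _, by simp⟩

lemma main_nf {f : ℂ → ℂ} (hNF : MeromorphicNFOn f Set.univ)
    (hord : ∀ z, meromorphicOrderAt f z ≠ ⊤) (c : ℂ) {δ ε : ℝ} (hδ : δ < 1) (hε : 0 < ε) :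
    ∃ E : Set ℝ, FinLogMeasure E ∧
      Tendsto (fun r : ℝ => proximity (fun z => f (z + c) / f z) ⊤ r /
          (characteristic f ⊤ (r + ‖c‖) ^ (1 + ε) / r ^ δ))
        (atTop ⊓ 𝓟 Eᶜ) (𝓝 0) := by
  have hf : Meromorphic f := fun z => (hNF (Set.mem_univ z)).meromorphicAt
  set T := characteristic f ⊤ with hT
  have hc0 := norm_nonneg c
  have hTm : MonotoneOn T (Set.Ioi 0) := characteristic_monotoneOn hf
  have hT0 : ∀ r, 1 ≤ r → 0 ≤ T r := fun r hr => characteristic_nonneg hr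
  by_cases hz : ∀ r, 1 ≤ r → T r = 0
  · refine ⟨∅, finLog_empty, ?_⟩
    refine tendsto_const_nhds.congr' ?_
    refine Filter.Eventually.filter_mono inf_le_left ?_
    filter_upwards [eventually_ge_atTop 1] with r hr
    rw [hz _ (by linarith), Real.zero_rpow (by linarith)]
    simp
  push Not at hz
  obtain ⟨r0, hr0, hTr0⟩ := hz
  set t := T r0 with ht
  have ht0 : 0 < t := lt_of_le_of_ne (hT0 r0 hr0) (Ne.symm hTr0)
  set S : ℝ → ℝ := fun r => T (r + ‖c‖) / t with hSdef
  have hSm : MonotoneOn S (Set.Ici r0) := by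
    intro x hx y hy hxy
    simp only [Set.mem_Ici] at hx hy
    simp only [hSdef]
    exact div_le_div_of_nonneg_right (hTm (by simp only [Set.mem_Ioi]; linarith)
      (by simp only [Set.mem_Ioi]; linarith) (by linarith)) ht0.le
  have hS1 : ∀ r, r0 ≤ r → 1 ≤ S r := by
    intro r hr
    simp only [hSdef]
    rw [one_le_div ht0]
    exact hTm (by simp only [Set.mem_Ioi]; linarith)
      (by simp only [Set.mem_Ioi]; linarith) (by linarith)
  set α := (max δ 0 + 1) / 2 with hα
  have hα0 : 0 < α := by have := le_max_right δ 0; rw [hα]; linarith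
  have hα1 : α < 1 := by have : max δ 0 < 1 := max_lt hδ one_pos; rw [hα]; linarith
  have hδα : δ < α := by
    have := le_max_left δ 0
    have h2 : max δ 0 < 1 := max_lt hδ one_pos
    rw [hα]; linarith
  obtain ⟨K, A, hK, hA, H⟩ := key2 hNF hord c hα0 hα1
  refine ⟨_, borel_growth (κ := ε / 2) hr0 (by linarith) hSm hS1, ?_⟩
  set C := (4 * t + A) * ((2 + ‖c‖) * (2 * K + 24 * ‖c‖)) / t ^ (1 + ε) with hC
  have hlim : Tendsto (fun r : ℝ => C * r ^ (-(α - δ)))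
      (atTop ⊓ 𝓟 {r | r0 ≤ r ∧ 2 * S r < S (r + r / S r ^ (ε / 2))}ᶜ) (𝓝 0) := by
    have := ((tendsto_rpow_neg_atTop (y := α - δ) (by linarith)).const_mul C).mono_left
      (inf_le_left (b := 𝓟 {r | r0 ≤ r ∧ 2 * S r < S (r + r / S r ^ (ε / 2))}ᶜ))
    simpa using this
  refine tendsto_of_tendsto_of_tendsto_of_le_of_le' tendsto_const_nhds hlim ?_ ?_
  · refine Filter.Eventually.filter_mono inf_le_left ?_
    filter_upwards [eventually_ge_atTop 1] with r hr
    have h1 := proximity_nonneg (f := fun z => f (z + c) / f z) (a := ⊤) r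
    have h2 := hT0 (r + ‖c‖) (by linarith)
    simp only [Pi.zero_apply] at h1
    positivity
  · rw [eventually_inf_principal]
    filter_upwards [eventually_ge_atTop r0] with r hr hE
    have hE' : S (r + r / S r ^ (ε / 2)) ≤ 2 * S r := by
      by_contra hlt
      push Not at hlt
      exact hE ⟨hr, hlt⟩
    have hr1 : 1 ≤ r := by linarith
    have hr0' : 0 < r := by linarith
    have hSr := hS1 r hr
    have hS0 : 0 < S r := by linarith
    set p := S r ^ (ε / 2) with hp
    have hp1 : 1 ≤ p := Real.one_le_rpow hSr (by linarith)
    have hp0 : 0 < p := by linarith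
    have hh : 0 < r / p := by positivity
    have H1 := H r (r / p) hr1 hh
    have hTS : ∀ x, T (x + ‖c‖) = t * S x := by
      intro x; simp only [hSdef]; field_simp
    rw [← hT, hTS] at H1
    set X := r ^ (-α) with hX
    have hX0 : 0 < X := by positivity
    have hXr : r⁻¹ ≤ X := by
      rw [hX, ← Real.rpow_neg_one]
      exact Real.rpow_le_rpow_of_exponent_le hr1 (by linarith)
    have f1 : 2 * (t * S (r + r / p)) + A ≤ (4 * t + A) * S r := by
      have a1 := mul_le_mul_of_nonneg_left hE' ht0.le
      have a2 := mul_le_mul_of_nonneg_left hSr hA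
      linarith
    have f2 : (r + r / p + ‖c‖) / (r / p) ≤ (2 + ‖c‖) * p := by
      rw [div_le_iff₀ hh]
      have a1 : r / p ≤ r := div_le_self hr0'.le hp1
      have a2 : (2 + ‖c‖) * p * (r / p) = (2 + ‖c‖) * r := by field_simp
      rw [a2]
      have a3 := mul_le_mul_of_nonneg_left hr1 hc0
      linarith
    have f3 : 2 * K * X + 24 * ‖c‖ / (r / p) ≤ (2 * K + 24 * ‖c‖) * (p * X) := by
      have a1 : 24 * ‖c‖ / (r / p) = 24 * ‖c‖ * (p * r⁻¹) := by field_simp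
      have a2 : p * r⁻¹ ≤ p * X := mul_le_mul_of_nonneg_left hXr hp0.le
      have a3 : X ≤ p * X := le_mul_of_one_le_left hX0.le hp1
      rw [a1, add_mul]
      have a4 := mul_le_mul_of_nonneg_left a2 (by positivity : 0 ≤ 24 * ‖c‖)
      have a5 := mul_le_mul_of_nonneg_left a3 (by positivity : 0 ≤ 2 * K)
      linarith
    have H2 : proximity (fun z => f (z + c) / f z) ⊤ r
        ≤ (4 * t + A) * S r * ((2 + ‖c‖) * p * ((2 * K + 24 * ‖c‖) * (p * X))) := by
      refine H1.trans ?_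
      have : 0 ≤ (r + r / p + ‖c‖) / (r / p) * (2 * K * X + 24 * ‖c‖ / (r / p)) := by positivity
      refine mul_le_mul f1 (mul_le_mul f2 f3 (by positivity) (by positivity)) this (by positivity)
    have hSp : S r * p * p = S r ^ (1 + ε) := by
      rw [hp, mul_assoc, ← Real.rpow_add hS0, Real.rpow_add hS0 1 ε, Real.rpow_one, add_halves]
    rw [hTS, Real.mul_rpow ht0.le hS0.le, div_le_iff₀ (by positivity)]
    refine H2.trans (le_of_eq ?_)
    have hXX : r ^ (-(α - δ)) = X * r ^ δ := by
      rw [hX, ← Real.rpow_add hr0']; congr 1; ring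
    rw [hXX, hC, ← hSp]
    have n1 : r ^ δ ≠ 0 := by positivity
    have n2 : t ^ (1 + ε) ≠ 0 := by positivity
    field_simp

lemma main_all {f : ℂ → ℂ} (hf : Meromorphic f) (c : ℂ) {δ ε : ℝ} (hδ : δ < 1) (hε : 0 < ε) :
    ∃ E : Set ℝ, FinLogMeasure E ∧
      Tendsto (fun r : ℝ => nevm (fun z => f (z + c) / f z) r /
          (nevT f (r + ‖c‖) ^ (1 + ε) / r ^ δ))
        (atTop ⊓ 𝓟 Eᶜ) (𝓝 0) := by
  set g := toMeromorphicNFOn f Set.univ with hg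
  have hfm : MeromorphicOn f Set.univ := hf.meromorphicOn
  have hfg : f =ᶠ[codiscrete ℂ] g := toMeromorphicNFOn_eqOn_codiscrete hfm
  have hq : (fun z => f (z + c) / f z) =ᶠ[codiscrete ℂ] (fun z => g (z + c) / g z) := by
    filter_upwards [hfg, codisc_shift c hfg] with z h1 h2
    rw [h1, h2]
  have hNF : MeromorphicNFOn g Set.univ := meromorphicNFOn_toMeromorphicNFOn f Set.univ
  have hgm : Meromorphic g := fun z => (hNF (Set.mem_univ z)).meromorphicAt
  have hm : ∀ r, 1 ≤ r → nevm (fun z => f (z + c) / f z) r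
      = proximity (fun z => g (z + c) / g z) ⊤ r := by
    intro r hr
    rw [nevm_eq_proximity, proximity_congr_codiscrete hq (by linarith)]
  have hT : ∀ r, 1 ≤ r → nevT f r = characteristic g ⊤ r := by
    intro r hr
    rw [nevT_eq_characteristic hf (by linarith), characteristic_congr_codiscrete hfg (by linarith)]
  by_cases hord : ∀ z, meromorphicOrderAt g z ≠ ⊤
  · obtain ⟨E, hE, hlim⟩ := main_nf hNF hord c hδ hε
    refine ⟨E, hE, hlim.congr' ?_⟩
    refine Filter.Eventually.filter_mono inf_le_left ?_
    filter_upwards [eventually_ge_atTop 1] with r hr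
    rw [hm r hr, hT _ (by linarith [norm_nonneg c])]
  · have hord2 : ∀ z, meromorphicOrderAt g z = ⊤ := by
      by_contra hcon
      push Not at hcon
      exact hord (hgm.exists_meromorphicOrderAt_ne_top_iff_forall.1 hcon)
    have hg0 : g =ᶠ[codiscrete ℂ] 0 := by
      simp only [Filter.EventuallyEq, Filter.Eventually, codiscrete,
        mem_codiscreteWithin_iff_forall_mem_nhdsNE, Set.compl_univ, Set.union_empty]
      intro x _
      exact meromorphicOrderAt_eq_top_iff.1 (hord2 x)
    have hq0 : (fun z => g (z + c) / g z) =ᶠ[codiscrete ℂ] (fun _ => (0:ℂ)) := by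
      filter_upwards [hg0] with z h1
      rw [h1]; simp
    refine ⟨∅, finLog_empty, tendsto_const_nhds.congr' ?_⟩
    refine Filter.Eventually.filter_mono inf_le_left ?_
    filter_upwards [eventually_ge_atTop 1] with r hr
    rw [hm r hr, proximity_congr_codiscrete hq0 (by linarith)]
    simp


end

/-- **Difference analogue of the Lemma on the Logarithmic Derivative.**
Let `f` be a non-constant meromorphic function on ℂ, `c ∈ ℂ`, `δ < 1` and `ε > 0`. Then
`m(r, f(z+c)/f(z)) = o(T(r+|c|, f)^{1+ε} / r^δ)` as `r → ∞` outside a possible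
exceptional set `E` of finite logarithmic measure. -/
theorem log_difference_lemma (f : ℂ → ℂ) (hf : MeromorphicOn f Set.univ)
    (hnc : Nonconstant f) (c : ℂ) (δ ε : ℝ) (hδ : δ < 1) (hε : 0 < ε) :
    ∃ E : Set ℝ, FinLogMeasure E ∧
      Tendsto (fun r : ℝ => nevm (fun z => f (z + c) / f z) r /
          (nevT f (r + ‖c‖) ^ (1 + ε) / r ^ δ))
        (atTop ⊓ 𝓟 Eᶜ) (𝓝 0) := by
  exact main_all (fun z => hf z trivial) c hδ hε
end

section
/- Let f be a non-constant meromorphic function on ℂ of finite order, let c ∈ ℂ and let δ < 1. Then m(r, f(z+c)/f(z)) = o( T(r+|c|, f) / r^δ ) as r → ∞, for all r outside a possible exceptional set of finite logarithmic measure. -/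
open MeasureTheory Filter Topology Metric

open Real in
lemma aux_logPlus (x : ℝ) : logPlus x = Real.posLog x := by
  simp [logPlus, Real.posLog, max_comm]

lemma aux_nevm (f : ℂ → ℂ) (r : ℝ) :
    nevm f r = Real.circleAverage (fun z => Real.posLog ‖f z‖) 0 r := by
  simp only [nevm, Real.circleAverage, aux_logPlus, circ, circleMap, zero_add, smul_eq_mul]

lemma aux_nevm_prox (f : ℂ → ℂ) (r : ℝ) :
    nevm f r = ValueDistribution.proximity f ⊤ r := by
  rw [aux_nevm, ValueDistribution.proximity_top]

lemma aux_poleOrd_mem {f : ℂ → ℂ} {x : ℂ} (hf : MeromorphicAt f x) (n : ℕ) :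
    (∃ g : ℂ → ℂ, AnalyticAt ℂ g x ∧ ∀ᶠ w in 𝓝[≠] x, (w - x) ^ n * f w = g w) ↔
      0 ≤ (n : WithTop ℤ) + meromorphicOrderAt f x := by
  have hpow : MeromorphicAt (fun w : ℂ => (w - x) ^ n) x := by fun_prop
  have hh : MeromorphicAt (fun w => (w - x) ^ n * f w) x := hpow.mul hf
  have ho : meromorphicOrderAt (fun w => (w - x) ^ n * f w) x
      = (n : WithTop ℤ) + meromorphicOrderAt f x := by
    have := meromorphicOrderAt_mul hpow hf
    have h2 : meromorphicOrderAt (fun w : ℂ => (w - x) ^ n) x = n := by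
      change _ = ((n : ℤ) : WithTop ℤ)
      rw [meromorphicOrderAt_eq_int_iff (n := (n:ℤ)) hpow]
      exact ⟨fun _ => 1, analyticAt_const, one_ne_zero, by simp⟩
    rw [h2] at this
    exact this
  constructor
  · rintro ⟨g, hg, he⟩
    rw [← ho, meromorphicOrderAt_congr he]
    exact hg.meromorphicOrderAt_nonneg
  · intro h
    refine ⟨toMeromorphicNFAt (fun w => (w - x) ^ n * f w) x, ?_, ?_⟩
    · rw [← (meromorphicNFAt_toMeromorphicNFAt).meromorphicOrderAt_nonneg_iff_analyticAt,
        meromorphicOrderAt_congr hh.eq_nhdsNE_toMeromorphicNFAt.symm, ho]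
      exact h
    · exact hh.eq_nhdsNE_toMeromorphicNFAt

lemma aux_poleOrd {f : ℂ → ℂ} {x : ℂ} (hf : MeromorphicAt f x) :
    (poleOrd f x : ℤ) = (meromorphicOrderAt f x).untop₀⁻ := by
  unfold poleOrd
  simp_rw [aux_poleOrd_mem hf]
  cases h : meromorphicOrderAt f x with
  | top => simp
  | coe m =>
    have : {n : ℕ | 0 ≤ (n : WithTop ℤ) + ((m : ℤ) : WithTop ℤ)} = Set.Ici (m⁻).toNat := by
      ext n
      have : (n : WithTop ℤ) + ((m : ℤ) : WithTop ℤ) = (((n : ℤ) + m : ℤ) : WithTop ℤ) := by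
        push_cast; rfl
      simp only [Set.mem_ofPred_eq, this, Set.mem_Ici, negPart_def]
      rw [show (0 : WithTop ℤ) = ((0 : ℤ) : WithTop ℤ) from rfl, WithTop.coe_le_coe]
      simp; omega
    change ((sInf {n : ℕ | 0 ≤ (n : WithTop ℤ) + ((m : ℤ) : WithTop ℤ)} : ℕ) : ℤ) = m⁻
    rw [this, csInf_Ici]
    simp [negPart_nonneg]

lemma aux_poleOrd_div {f : ℂ → ℂ} (hf : MeromorphicOn f Set.univ) (x : ℂ) :
    (poleOrd f x : ℤ) = (MeromorphicOn.divisor f Set.univ)⁻ x := by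
  rw [aux_poleOrd (hf x trivial)]
  simp [hf.divisor_apply (Set.mem_univ x)]

lemma aux_int_ind {a r : ℝ} (ha : 0 < a) (har : a ≤ r) :
    IntervalIntegrable (fun t : ℝ => (if a ≤ t then (1:ℝ) else 0) / t) volume 0 r ∧
    ∫ t in (0:ℝ)..r, (if a ≤ t then (1:ℝ) else 0) / t = Real.log (r * a⁻¹) := by
  have h1 : IntervalIntegrable (fun t : ℝ => (if a ≤ t then (1:ℝ) else 0) / t) volume 0 a := by
    refine (intervalIntegrable_const (c := (0:ℝ))).congr_ae ?_
    rw [Set.uIoc_of_le ha.le]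
    refine (ae_restrict_iff' measurableSet_Ioc).2 ?_
    have : ∀ᵐ t : ℝ, t ≠ a := by simp [ae_iff, measure_singleton]
    filter_upwards [this] with t ht h2
    have : ¬ a ≤ t := fun h => ht (le_antisymm h2.2 h)
    simp [this]
  have h2 : IntervalIntegrable (fun t : ℝ => (if a ≤ t then (1:ℝ) else 0) / t) volume a r := by
    have : IntervalIntegrable (fun t : ℝ => t⁻¹) volume a r :=
      intervalIntegral.intervalIntegrable_inv (fun x hx => by
        rw [Set.uIcc_of_le har] at hx; linarith [hx.1]) continuousOn_id
    refine this.congr fun t ht => ?_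
    rw [Set.uIoc_of_le har] at ht
    simp [ht.1.le]
  refine ⟨h1.trans h2, ?_⟩
  rw [← intervalIntegral.integral_add_adjacent_intervals h1 h2]
  have e1 : ∫ t in (0:ℝ)..a, (if a ≤ t then (1:ℝ) else 0) / t = 0 := by
    apply intervalIntegral.integral_zero_ae
    have : ∀ᵐ t : ℝ, t ≠ a := by simp [ae_iff, measure_singleton]
    filter_upwards [this] with t ht h2
    rw [Set.uIoc_of_le ha.le] at h2
    have : ¬ a ≤ t := fun h => ht (le_antisymm h2.2 h)
    simp [this]
  have e2 : ∫ t in a..r, (if a ≤ t then (1:ℝ) else 0) / t = ∫ t in a..r, t⁻¹ := by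
    apply intervalIntegral.integral_congr
    intro t ht
    rw [Set.uIcc_of_le har] at ht
    simp [ht.1]
  rw [e1, e2, integral_inv_of_pos ha (ha.trans_le har)]
  simp [div_eq_mul_inv]

lemma aux_nevN {f : ℂ → ℂ} (hf : MeromorphicOn f Set.univ) {r : ℝ} (hr : 0 < r) :
    nevN f r = ValueDistribution.logCounting f ⊤ r := by
  classical
  set D := (MeromorphicOn.divisor f Set.univ)⁻ with hD
  rw [ValueDistribution.logCounting_top]
  change _ = ∑ᶠ z, (D.toClosedBall r z : ℝ) * Real.log (r * ‖z‖⁻¹) + (D 0) * Real.log r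
  have hfin : (D.toClosedBall r).support.Finite :=
    (D.toClosedBall r).finiteSupport (isCompact_closedBall 0 |r|)
  set S := hfin.toFinset with hS
  have hpd : ∀ x, ((poleOrd f x : ℕ) : ℝ) = (D x : ℝ) := fun x => by
    exact_mod_cast congrArg (fun n : ℤ => (n:ℝ)) (aux_poleOrd_div hf x)
  have hmem : ∀ z, z ∈ S ↔ ‖z‖ ≤ r ∧ D z ≠ 0 := by
    intro z
    by_cases hz : z ∈ closedBall (0:ℂ) |r|
    · have hz' : ‖z‖ ≤ r := by simpa [abs_of_pos hr] using hz
      simp [hS, hz', Function.locallyFinsuppWithin.toClosedBall_eval_within D hz]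
    · have hz' : ¬ ‖z‖ ≤ r := by simpa [abs_of_pos hr] using hz
      have : D.toClosedBall r z = 0 := Function.locallyFinsuppWithin.apply_eq_zero_of_notMem _ hz
      simp [hS, hz', this]
  have hn : ∀ t, t ≤ r → (nevn f t : ℝ) = ∑ z ∈ S, (D z : ℝ) * (if ‖z‖ ≤ t then 1 else 0) := by
    intro t ht
    have : nevn f t = ∑ z ∈ S.filter (fun z => ‖z‖ ≤ t), poleOrd f z := by
      unfold nevn
      apply finsum_mem_eq_sum_of_inter_support_eq
      ext z
      have h0 : poleOrd f z ≠ 0 ↔ D z ≠ 0 := by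
        rw [← aux_poleOrd_div hf z]; simp
      simp only [Set.mem_inter_iff, mem_closedBall, dist_zero_right, Function.mem_support,
        Finset.coe_filter, Set.mem_ofPred_eq, hmem, h0]
      constructor
      · rintro ⟨a, b⟩; exact ⟨⟨⟨a.trans ht, b⟩, a⟩, b⟩
      · rintro ⟨⟨a, b⟩, c⟩; exact ⟨b, c⟩
    rw [this, Nat.cast_sum, Finset.sum_filter]
    refine Finset.sum_congr rfl fun z _ => ?_
    split_ifs <;> simp [hpd]
  have h0 : (nevn f 0 : ℝ) = D 0 := by
    rw [hn 0 hr.le]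
    have : ∀ z ∈ S, (D z : ℝ) * (if ‖z‖ ≤ 0 then 1 else 0) = if z = 0 then (D 0 : ℝ) else 0 := by
      intro z _
      by_cases hz : z = 0 <;> simp [hz]
    rw [Finset.sum_congr rfl this, Finset.sum_ite_eq']
    split_ifs with h
    · rfl
    · have : ¬ (‖(0:ℂ)‖ ≤ r ∧ D 0 ≠ 0) := fun h' => h ((hmem 0).2 h')
      simp [hr.le] at this
      simp [this]
  unfold nevN
  congr 1
  swap
  · rw [h0]
  rw [finsum_eq_sum_of_support_subset (s := S)]
  swap
  · intro z hz
    simp only [Function.mem_support, ne_eq, mul_eq_zero, not_or, Int.cast_eq_zero] at hz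
    simpa [hS] using hz.1
  have hint : ∀ z ∈ S, z ≠ 0 → IntervalIntegrable
      (fun t : ℝ => (if ‖z‖ ≤ t then (1:ℝ) else 0) / t) volume 0 r ∧
      ∫ t in (0:ℝ)..r, (if ‖z‖ ≤ t then (1:ℝ) else 0) / t = Real.log (r * ‖z‖⁻¹) := by
    intro z hz hz0
    exact aux_int_ind (norm_pos_iff.2 hz0) ((hmem z).1 hz).1
  have e1 : ∫ t in (0:ℝ)..r, ((nevn f t : ℝ) - (nevn f 0 : ℝ)) / t =
      ∫ t in (0:ℝ)..r, ∑ z ∈ S, (if z = 0 then 0 else (D z : ℝ)) *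
        ((if ‖z‖ ≤ t then (1:ℝ) else 0) / t) := by
    apply intervalIntegral.integral_congr
    intro t ht
    rw [Set.uIcc_of_le hr.le] at ht
    simp only
    rw [hn t ht.2, hn 0 hr.le, ← Finset.sum_sub_distrib, Finset.sum_div]
    refine Finset.sum_congr rfl fun z _ => ?_
    by_cases hz : z = 0
    · simp [hz, ht.1]
    · by_cases h : ‖z‖ ≤ t <;> simp [hz, h, div_eq_mul_inv]
  rw [e1, intervalIntegral.integral_finsetSum]
  · refine Finset.sum_congr rfl fun z hz => ?_
    by_cases hz0 : z = 0
    · simp [hz0]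
    · rw [intervalIntegral.integral_const_mul, (hint z hz hz0).2,
        Function.locallyFinsuppWithin.toClosedBall_eval_within D]
      · simp [hz0]
      · simpa [abs_of_pos hr] using ((hmem z).1 hz).1
  · intro z hz
    by_cases hz0 : z = 0
    · simp [hz0]
    · exact (hint z hz hz0).1.const_mul _

lemma aux_nevT {f : ℂ → ℂ} (hf : MeromorphicOn f Set.univ) {r : ℝ} (hr : 0 < r) :
    nevT f r = ValueDistribution.characteristic f ⊤ r := by
  rw [nevT, aux_nevm_prox, aux_nevN hf hr]; rfl
lemma aux_codisc_shift {s : Set ℂ} (hs : s ∈ codiscrete ℂ) (c : ℂ) :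
    (fun z => z + c) ⁻¹' s ∈ codiscrete ℂ := by
  rw [mem_codiscrete'] at hs ⊢
  refine ⟨hs.1.preimage (by fun_prop), ?_⟩
  rw [← Set.preimage_compl]
  exact hs.2.preimage (by fun_prop) (add_left_injective c)

lemma aux_trivial {f : ℂ → ℂ} {a : ℂ} (h : f =ᶠ[codiscrete ℂ] fun _ => a) (c : ℂ) {r : ℝ}
    (hr : r ≠ 0) : nevm (fun z => f (z + c) / f z) r = 0 := by
  rw [aux_nevm_prox]
  have h2 : (fun z => f (z + c)) =ᶠ[codiscrete ℂ] fun _ => a := aux_codisc_shift h c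
  have : (fun z => f (z + c) / f z) =ᶠ[codiscrete ℂ] fun _ => a / a := by
    filter_upwards [h, h2] with z h1 h2
    rw [h1, h2]
  rw [ValueDistribution.proximity_congr_codiscrete this hr, ValueDistribution.proximity_top]
  by_cases ha : a = 0 <;> simp [ha, Real.circleAverage_const]

lemma aux_count {D : Function.locallyFinsupp ℂ ℤ} (hD : 0 ≤ D) {R R' : ℝ} (hR : 1 ≤ R)
    (hRR : R < R') (S : Finset ℂ) (hS : ∀ z ∈ S, ‖z‖ ≤ R) :
    (∑ z ∈ S, (D z : ℝ)) * Real.log (R' / R) ≤ Function.locallyFinsuppWithin.logCounting D R' := by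
  classical
  change _ ≤ ∑ᶠ z, (D.toClosedBall R' z : ℝ) * Real.log (R' * ‖z‖⁻¹) + (D 0) * Real.log R'
  have hR' : 0 < R' := by linarith
  have hD0 : ∀ z, (0:ℝ) ≤ D z := fun z => by exact_mod_cast hD z
  have hfin : (D.toClosedBall R').support.Finite :=
    (D.toClosedBall R').finiteSupport (isCompact_closedBall 0 |R'|)
  have hterm : ∀ z, 0 ≤ (D.toClosedBall R' z : ℝ) * Real.log (R' * ‖z‖⁻¹) := by
    intro z
    by_cases hz : z ∈ closedBall (0:ℂ) |R'|
    · rw [Function.locallyFinsuppWithin.toClosedBall_eval_within D hz]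
      apply mul_nonneg (hD0 z)
      by_cases hz0 : z = 0
      · simp [hz0]
      · apply Real.log_nonneg
        have : ‖z‖ ≤ R' := by simpa [abs_of_pos hR'] using hz
        rw [← div_eq_mul_inv, one_le_div (norm_pos_iff.2 hz0)]
        exact this
    · have : D.toClosedBall R' z = 0 := Function.locallyFinsuppWithin.apply_eq_zero_of_notMem _ hz
      simp [this]
  rw [finsum_eq_sum_of_support_subset (s := hfin.toFinset ∪ S)]
  swap
  · intro z hz
    simp only [Function.mem_support, ne_eq, mul_eq_zero, not_or, Int.cast_eq_zero] at hz
    simp [hz.1]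
  have hlog : 0 ≤ Real.log R' := Real.log_nonneg (by linarith)
  have h1 : ∑ z ∈ S, (D.toClosedBall R' z : ℝ) * Real.log (R' * ‖z‖⁻¹) ≤
      ∑ z ∈ hfin.toFinset ∪ S, (D.toClosedBall R' z : ℝ) * Real.log (R' * ‖z‖⁻¹) :=
    Finset.sum_le_sum_of_subset_of_nonneg Finset.subset_union_right fun z _ _ => hterm z
  have h2 : ∑ z ∈ S, (if z = 0 then (D 0 : ℝ) * Real.log R' else 0) ≤ D 0 * Real.log R' := by
    rw [Finset.sum_ite_eq']
    split_ifs
    · exact le_rfl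
    · exact mul_nonneg (hD0 0) hlog
  refine le_trans ?_ (add_le_add h1 h2)
  rw [← Finset.sum_add_distrib, Finset.sum_mul]
  refine Finset.sum_le_sum fun z hz => ?_
  have hzR := hS z hz
  rw [Function.locallyFinsuppWithin.toClosedBall_eval_within D (by
    simp [abs_of_pos hR']; linarith)]
  by_cases hz0 : z = 0
  · simp only [hz0, norm_zero, inv_zero, mul_zero, Real.log_zero, if_true, zero_add]
    gcongr
    · exact hD0 0
    · exact div_le_self hR'.le hR
  · simp only [hz0, if_false, add_zero]
    have := norm_pos_iff.2 hz0
    rw [div_eq_mul_inv]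
    gcongr
    exact hD0 z

lemma aux_count2 {f : ℂ → ℂ} {R R' : ℝ} (hR : 1 ≤ R)
    (hRR : R < R') (S : Finset ℂ) (hS : ∀ z ∈ S, ‖z‖ ≤ R) :
    (∑ z ∈ S, |(MeromorphicOn.divisor f Set.univ z : ℝ)|) * Real.log (R' / R) ≤
      ValueDistribution.logCounting f ⊤ R' + ValueDistribution.logCounting f⁻¹ ⊤ R' := by
  have h1 := aux_count (negPart_nonneg (MeromorphicOn.divisor f Set.univ)) hR hRR S hS
  have h2 := aux_count (posPart_nonneg (MeromorphicOn.divisor f Set.univ)) hR hRR S hS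
  rw [ValueDistribution.logCounting_inv, ValueDistribution.logCounting_top,
    ValueDistribution.logCounting_zero]
  refine le_trans (le_of_eq ?_) (add_le_add h1 h2)
  rw [← add_mul, ← Finset.sum_add_distrib]
  congr 1
  refine Finset.sum_congr rfl fun z _ => ?_
  rw [Function.locallyFinsuppWithin.negPart_apply, Function.locallyFinsuppWithin.posPart_apply,
    add_comm, ← Int.cast_add, posPart_add_negPart, Int.cast_abs]

lemma aux_tendsto {f : ℂ → ℂ} (hf : Meromorphic f)
    (hn : ¬ ∃ a : ℂ, f =ᶠ[codiscrete ℂ] fun _ => a) :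
    Tendsto (ValueDistribution.characteristic f ⊤) atTop atTop := by
  have han : ∀ᶠ z in codiscrete ℂ, AnalyticAt ℂ f z :=
    (MeromorphicOn.eventually_codiscreteWithin_analyticAt (U := Set.univ) f
      (fun z _ => hf z))
  have : (codiscrete ℂ).NeBot := by
    rw [neBot_iff]
    intro h
    have : (∅ : Set ℂ) ∈ codiscrete ℂ := by rw [h]; trivial
    rw [mem_codiscrete] at this
    have h0 := this 0
    simp at h0
    exact (inferInstance : (𝓝[≠] (0:ℂ)).NeBot).ne h0
  obtain ⟨z0, hz0⟩ := han.exists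
  set a := f z0 with ha
  set g : ℂ → ℂ := fun z => f z - a with hg
  have hgm : Meromorphic g := fun z => (hf z).sub (by fun_prop)
  have hga : AnalyticAt ℂ g z0 := hz0.sub (by fun_prop)
  have hord : meromorphicOrderAt g z0 ≠ ⊤ := by
    intro htop
    apply hn
    refine ⟨a, ?_⟩
    have hall : ∀ z, meromorphicOrderAt g z = ⊤ := by
      by_contra hcon
      push Not at hcon
      exact (hgm.exists_meromorphicOrderAt_ne_top_iff_forall.1 hcon) z0 htop
    change {z | f z = a} ∈ codiscrete ℂ
    rw [mem_codiscrete]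
    intro z
    rw [disjoint_principal_right, compl_compl]
    have := meromorphicOrderAt_eq_top_iff.1 (hall z)
    filter_upwards [this] with w hw
    exact sub_eq_zero.1 hw
  have hpos : 0 < MeromorphicOn.divisor g Set.univ z0 := by
    rw [MeromorphicOn.divisor_apply (fun z _ => hgm z) (Set.mem_univ z0)]
    have h1 : 0 ≤ meromorphicOrderAt g z0 := hga.meromorphicOrderAt_nonneg
    have h2 : meromorphicOrderAt g z0 ≠ 0 := by
      rw [Ne, hga.meromorphicNFAt.meromorphicOrderAt_eq_zero_iff]
      simp [hg, ha]
    lift meromorphicOrderAt g z0 to ℤ using hord with m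
    simp at h1 h2 ⊢
    omega
  set R := max 1 ‖z0‖
  have hR : 1 ≤ R := le_max_left _ _
  have key : ∀ R', R < R' → Real.log (R' / R) - (Real.posLog ‖a‖ + Real.log 2) -
      max |Real.log ‖g 0‖| |Real.log ‖meromorphicTrailingCoeffAt g 0‖| ≤
      ValueDistribution.characteristic f ⊤ R' := by
    intro R' hRR
    have h1 := aux_count (posPart_nonneg (MeromorphicOn.divisor g Set.univ)) hR hRR {z0}
      (by simp [R])
    have h2 : ValueDistribution.logCounting g⁻¹ ⊤ R' =
        (MeromorphicOn.divisor g Set.univ)⁺.logCounting R' := by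
      rw [ValueDistribution.logCounting_inv, ValueDistribution.logCounting_zero]
    have h3 : ValueDistribution.logCounting g⁻¹ ⊤ R' ≤
        ValueDistribution.characteristic g⁻¹ ⊤ R' := by
      have : ValueDistribution.characteristic g⁻¹ ⊤ R' =
        ValueDistribution.proximity g⁻¹ ⊤ R' + ValueDistribution.logCounting g⁻¹ ⊤ R' := rfl
      rw [this]
      have := ValueDistribution.proximity_nonneg (f := g⁻¹) (a := ⊤) R'
      have h0 : 0 ≤ ValueDistribution.proximity g⁻¹ ⊤ R' := this
      linarith
    have h4 := abs_le.1 (ValueDistribution.characteristic_sub_characteristic_inv_le hgm (R := R'))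
    have h5 := abs_le.1 (ValueDistribution.abs_characteristic_sub_characteristic_shift_le
      (a₀ := a) (r := R') hf)
    have h6 : Real.log (R' / R) ≤ (∑ z ∈ ({z0} : Finset ℂ),
        (((MeromorphicOn.divisor g Set.univ)⁺ z : ℤ) : ℝ)) * Real.log (R' / R) := by
      apply le_mul_of_one_le_left
      · apply Real.log_nonneg
        rw [one_le_div (by linarith)]; exact hRR.le
      · rw [Finset.sum_singleton, Function.locallyFinsuppWithin.posPart_apply,
          posPart_of_nonneg hpos.le]
        exact_mod_cast hpos
    have h7 : (fun x => f x - a) = g := rfl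
    rw [h7] at h5
    linarith [h4.1, h4.2, h5.1, h5.2]
  have hl : Tendsto (fun R' => Real.log (R' / R) - (Real.posLog ‖a‖ + Real.log 2) -
      max |Real.log ‖g 0‖| |Real.log ‖meromorphicTrailingCoeffAt g 0‖|) atTop atTop := by
    simp only [sub_eq_add_neg]
    refine tendsto_atTop_add_const_right _ _ (tendsto_atTop_add_const_right _ _ ?_)
    exact Real.tendsto_log_atTop.comp (tendsto_id.atTop_div_const (by linarith))
  refine tendsto_atTop_mono' _ ?_ hl
  filter_upwards [eventually_gt_atTop R] with R' h using key R' h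

lemma aux_order_ne_top {f : ℂ → ℂ} (hf : Meromorphic f)
    (hn : ¬ ∃ a : ℂ, f =ᶠ[codiscrete ℂ] fun _ => a) (z : ℂ) : meromorphicOrderAt f z ≠ ⊤ := by
  intro htop
  apply hn
  refine ⟨0, ?_⟩
  have hall : ∀ w, meromorphicOrderAt f w = ⊤ := by
    by_contra hcon
    push Not at hcon
    exact (hf.exists_meromorphicOrderAt_ne_top_iff_forall.1 hcon) z htop
  change {z | f z = 0} ∈ codiscrete ℂ
  rw [mem_codiscrete]
  intro z
  rw [disjoint_principal_right, compl_compl]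
  exact meromorphicOrderAt_eq_top_iff.1 (hall z)
lemma aux_abs_rpow_int {s : ℝ} (hs1 : s < 1) (a b : ℝ) :
    IntervalIntegrable (fun x : ℝ => |x| ^ (-s)) volume a b := by
  have h1 : ∀ b : ℝ, 0 ≤ b → IntervalIntegrable (fun x : ℝ => |x| ^ (-s)) volume 0 b := by
    intro b hb
    refine (intervalIntegral.intervalIntegrable_rpow' (a := 0) (b := b) (r := -s)
      (by linarith)).congr ?_
    intro x hx
    rw [Set.uIoc_of_le hb] at hx
    simp only
    rw [abs_of_pos hx.1]
  have h2 : ∀ b : ℝ, IntervalIntegrable (fun x : ℝ => |x| ^ (-s)) volume 0 b := by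
    intro b
    rcases le_total 0 b with hb | hb
    · exact h1 b hb
    · have := (IntervalIntegrable.comp_mul_left (c := -1) (h1 (-b) (by linarith)))
      simpa using this
  exact (h2 a).symm.trans (h2 b)

lemma aux_sin_bound {s : ℝ} (hs0 : 0 < s) {θ : ℝ} (h0 : 0 < θ) (h2 : θ < 2 * Real.pi)
    (hpi : θ ≠ Real.pi) {y : ℝ} {r : ℝ} (hr : 0 < r) (hy : r * |Real.sin θ| ≤ y) :
    y ^ (-s) ≤ r ^ (-s) * ((2 / Real.pi) ^ (-s) *
      (|θ - 0| ^ (-s) + |θ - Real.pi| ^ (-s) + |θ - 2 * Real.pi| ^ (-s))) := by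
  have hp := Real.pi_pos
  have key : ∀ t : ℝ, 0 < t → 2 / Real.pi * t ≤ |Real.sin θ| →
      y ^ (-s) ≤ r ^ (-s) * ((2 / Real.pi) ^ (-s) * t ^ (-s)) := by
    intro t ht h
    rw [← Real.mul_rpow (by positivity) (by positivity),
      ← Real.mul_rpow (by positivity) (by positivity)]
    apply Real.rpow_le_rpow_of_nonpos (by positivity) _ (by linarith)
    exact le_trans (by gcongr) hy
  have n1 : 0 ≤ |θ - 0| ^ (-s) := by positivity
  have n2 : 0 ≤ |θ - Real.pi| ^ (-s) := by positivity
  have n3 : 0 ≤ |θ - 2 * Real.pi| ^ (-s) := by positivity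
  by_cases c1 : θ ≤ Real.pi / 2
  · refine (key |θ - 0| (by simp [h0.ne']) ?_).trans ?_
    · have := Real.mul_abs_le_abs_sin (x := θ) (by rw [abs_of_pos h0]; exact c1)
      simpa using this
    · gcongr; linarith
  by_cases c2 : θ ≤ 3 * Real.pi / 2
  · refine (key |θ - Real.pi| (by simpa [sub_eq_zero] using hpi) ?_).trans ?_
    · have := Real.mul_abs_le_abs_sin (x := θ - Real.pi) (by rw [abs_le]; constructor <;> linarith)
      simpa [Real.sin_sub_pi] using this
    · gcongr; linarith
  · refine (key |θ - 2 * Real.pi| (by rw [abs_pos]; linarith) ?_).trans ?_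
    · have := Real.mul_abs_le_abs_sin (x := θ - 2 * Real.pi)
        (by rw [abs_le]; constructor <;> linarith)
      simpa [Real.sin_sub_two_pi] using this
    · gcongr; linarith

lemma aux_circ_bound {s : ℝ} (hs0 : 0 < s) (hs1 : s < 1) : ∃ K : ℝ, 0 ≤ K ∧ ∀ r : ℝ, 0 < r →
    ∀ a : ℂ, CircleIntegrable (fun z => ‖z - a‖ ^ (-s)) 0 r ∧
      Real.circleAverage (fun z => ‖z - a‖ ^ (-s)) 0 r ≤ K * r ^ (-s) := by
  set M : ℝ → ℝ := fun θ => ((2 / Real.pi) ^ (-s) *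
      (|θ - 0| ^ (-s) + |θ - Real.pi| ^ (-s) + |θ - 2 * Real.pi| ^ (-s))) with hM
  have hp := Real.pi_pos
  have hMi : IntervalIntegrable M volume 0 (2 * Real.pi) := by
    have h : ∀ d : ℝ, IntervalIntegrable (fun θ : ℝ => |θ - d| ^ (-s)) volume 0 (2 * Real.pi) := by
      intro d
      have := (aux_abs_rpow_int hs1 (0 - d) (2 * Real.pi - d)).comp_sub_right d
      simpa using this
    exact (((h 0).add (h _)).add (h _)).const_mul _
  refine ⟨(2 * Real.pi)⁻¹ * ∫ θ in (0:ℝ)..(2 * Real.pi), M θ, ?_, ?_⟩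
  · apply mul_nonneg (by positivity)
    apply intervalIntegral.integral_nonneg (by positivity)
    intro θ _
    simp only [hM]
    positivity
  intro r hr a
  set φ := Complex.arg a with hφ
  set F : ℝ → ℝ := fun θ => ‖circleMap 0 r θ - a‖ ^ (-s) with hF
  have hFm : Measurable F := by
    have : Measurable (circleMap 0 r) := (continuous_circleMap 0 r).measurable
    simp only [hF]
    fun_prop
  have hlow : ∀ θ : ℝ, r * |Real.sin θ| ≤ ‖circleMap 0 r (θ + φ) - a‖ := by
    intro θ
    have e1 : circleMap 0 r (θ + φ) - a =
        (circleMap 0 r θ - ‖a‖) * Complex.exp (φ * Complex.I) := by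
      conv_lhs => rw [← Complex.norm_mul_exp_arg_mul_I a]
      simp only [circleMap, hφ]
      push_cast
      rw [add_mul, Complex.exp_add]
      ring
    rw [e1, norm_mul, Complex.norm_exp_ofReal_mul_I, mul_one]
    refine le_trans (le_of_eq ?_) (Complex.abs_im_le_norm _)
    simp [circleMap, Complex.exp_ofReal_mul_I_im, abs_mul, abs_of_pos hr]
  have hbd : ∀ᵐ θ ∂volume.restrict (Set.uIoc 0 (2 * Real.pi)), ‖F (θ + φ)‖ ≤ r ^ (-s) * M θ := by
    rw [Set.uIoc_of_le (by positivity)]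
    have h1 : ∀ᵐ θ : ℝ, θ ≠ Real.pi := by simp [ae_iff, measure_singleton]
    have h2 : ∀ᵐ θ : ℝ, θ ≠ 2 * Real.pi := by simp [ae_iff, measure_singleton]
    filter_upwards [ae_restrict_mem measurableSet_Ioc, ae_restrict_of_ae h1,
      ae_restrict_of_ae h2] with θ h3 h1 h2
    rw [Real.norm_of_nonneg (by simp only [hF]; positivity)]
    exact aux_sin_bound hs0 h3.1 (lt_of_le_of_ne h3.2 h2) h1 hr (hlow θ)
  have hFs : IntervalIntegrable (fun θ => F (θ + φ)) volume 0 (2 * Real.pi) :=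
    (hMi.const_mul (r ^ (-s))).mono_fun'
      (hFm.comp (measurable_id.add_const φ)).aestronglyMeasurable hbd
  have hper : Function.Periodic F (2 * Real.pi) := by
    intro θ
    simp only [hF, (periodic_circleMap 0 r) θ]
  refine ⟨?_, ?_⟩
  · have h := hFs.comp_sub_right φ
    simp only [sub_add_cancel] at h
    have : 0 + φ + 2 * Real.pi = 2 * Real.pi + φ := by ring
    rw [← this] at h
    exact hper.intervalIntegrable (by positivity) h 0 (2 * Real.pi)
  · rw [Real.circleAverage_eq_integral_add φ, smul_eq_mul, mul_assoc]
    gcongr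
    rw [mul_comm _ (r ^ (-s)), ← intervalIntegral.integral_const_mul]
    apply intervalIntegral.integral_mono_ae_restrict (by positivity) hFs (hMi.const_mul _)
    rw [Set.uIoc_of_le (by positivity)] at hbd
    rw [restrict_Ioc_eq_restrict_Icc] at hbd
    filter_upwards [hbd] with θ h
    exact (Real.le_norm_self _).trans h
lemma aux_kernel_diff {ζ w c : ℂ} {R ρ : ℝ} (hw : ‖w‖ ≤ ρ) (hwc : ‖w + c‖ ≤ ρ) (hρ : ρ < R)
    (hζ : ‖ζ‖ = R) :
    ‖herglotzRieszKernel 0 (w + c) ζ - herglotzRieszKernel 0 w ζ‖ ≤ 2 * R * ‖c‖ / (R - ρ) ^ 2 := by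
  have h1 : R - ρ ≤ ‖ζ - w‖ := by
    have := norm_sub_norm_le ζ w
    linarith
  have h2 : R - ρ ≤ ‖ζ - (w + c)‖ := by
    have := norm_sub_norm_le ζ (w + c)
    linarith
  have hp : 0 < R - ρ := by linarith
  have n1 : ζ - w ≠ 0 := norm_pos_iff.1 (by linarith)
  have n2 : ζ - (w + c) ≠ 0 := norm_pos_iff.1 (by linarith)
  have e : herglotzRieszKernel 0 (w + c) ζ - herglotzRieszKernel 0 w ζ =
      2 * ζ * c / ((ζ - w) * (ζ - (w + c))) := by
    simp only [herglotzRieszKernel, sub_zero]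
    field_simp
    ring
  rw [e, norm_div, norm_mul, norm_mul, norm_mul, hζ]
  have hR : 0 ≤ R := hζ ▸ norm_nonneg _
  simp only [Complex.norm_ofNat]
  rw [sq]
  gcongr

lemma aux_poisson {h : ℂ → ℝ} {R ρ : ℝ} {w c : ℂ}
    (hh : InnerProductSpace.HarmonicOnNhd h (closedBall 0 R))
    (hw : ‖w‖ ≤ ρ) (hwc : ‖w + c‖ ≤ ρ) (hρ : ρ < R) :
    |h (w + c) - h w| ≤ 2 * R * ‖c‖ / (R - ρ) ^ 2 * Real.circleAverage (fun z => |h z|) 0 R := by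
  have hR : 0 < R := lt_of_le_of_lt ((norm_nonneg _).trans hw) hρ
  have hcont : ContinuousOn h (sphere 0 |R|) := by
    intro z hz
    rw [abs_of_pos hR] at hz
    exact (hh z (sphere_subset_closedBall hz)).1.continuousAt.continuousWithinAt
  have hk : ∀ v : ℂ, ‖v‖ ≤ ρ → ContinuousOn (Complex.re ∘ herglotzRieszKernel 0 v • h)
      (sphere 0 |R|) := by
    intro v hv
    have : ContinuousOn (fun z => ((herglotzRieszKernel 0 v z).re) * h z) (sphere 0 |R|) := by
      apply ContinuousOn.mul _ hcont
      apply Complex.continuous_re.comp_continuousOn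
      have e : herglotzRieszKernel 0 v = fun z => (z + v) / (z - v) := by
        funext z; simp [herglotzRieszKernel]
      rw [e]
      apply ContinuousOn.div (by fun_prop) (by fun_prop)
      intro z hz h0
      rw [abs_of_pos hR, mem_sphere_zero_iff_norm, sub_eq_zero.1 h0] at hz
      linarith
    exact this
  have hb : ∀ v : ℂ, ‖v‖ ≤ ρ → v ∈ ball (0:ℂ) R := fun v hv => by
    rw [mem_ball_zero_iff]; linarith
  rw [← hh.circleAverage_re_herglotzRieszKernel_smul (hb _ hw),
    ← hh.circleAverage_re_herglotzRieszKernel_smul (hb _ hwc),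
    ← Real.circleAverage_sub (hk _ hwc).circleIntegrable' (hk _ hw).circleIntegrable']
  refine Real.abs_circleAverage_le_circleAverage_abs.trans ?_
  rw [← smul_eq_mul, ← Real.circleAverage_fun_smul]
  apply Real.circleAverage_mono
  · exact (((hk _ hwc).sub (hk _ hw)).abs).circleIntegrable'
  · have hc2 : ContinuousOn (fun z => (2 * R * ‖c‖ / (R - ρ) ^ 2) • |h z|) (sphere 0 |R|) :=
      continuousOn_const.mul hcont.abs
    exact hc2.circleIntegrable'
  · intro x hx
    rw [abs_of_pos hR, mem_sphere_zero_iff_norm] at hx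
    have e : (Complex.re ∘ herglotzRieszKernel 0 (w + c) • h - Complex.re ∘ herglotzRieszKernel 0 w • h) x
      = (herglotzRieszKernel 0 (w + c) x - herglotzRieszKernel 0 w x).re * h x := by
      simp [sub_mul]
    rw [Pi.abs_apply, e, abs_mul, smul_eq_mul]
    gcongr
    exact (Complex.abs_re_le_norm _).trans (aux_kernel_diff hw hwc hρ hx)

lemma aux_abs_log (x : ℝ) : |Real.log x| = Real.posLog x + Real.posLog x⁻¹ := by
  simp only [Real.posLog, Real.log_inv]
  rcases le_total 0 (Real.log x) with h | h
  · rw [abs_of_nonneg h, max_eq_right h, max_eq_left (by linarith)]; ring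
  · rw [abs_of_nonpos h, max_eq_left h, max_eq_right (by linarith)]; ring

lemma aux_abs_log2 (x : ℝ) : |Real.log x| = 2 * Real.posLog x - Real.log x := by
  simp only [Real.posLog]
  rcases le_total 0 (Real.log x) with h | h
  · rw [abs_of_nonneg h, max_eq_right h]; ring
  · rw [abs_of_nonpos h, max_eq_left h]; ring

lemma aux_avg_log_sub {R : ℝ} (hR : 1 ≤ R) {u : ℂ} (hu : ‖u‖ ≤ R) :
    Real.circleAverage (fun z => |Real.log ‖z - u‖|) 0 R ≤ 2 * Real.log (2 * R) := by
  have hR0 : 0 < R := by linarith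
  have hi : CircleIntegrable (fun z => Real.log ‖z - u‖) 0 R :=
    circleIntegrable_log_norm_sub_const R
  have hip : CircleIntegrable (fun z => Real.posLog ‖z - u‖) 0 R :=
    MeromorphicOn.circleIntegrable_posLog_norm (f := fun z => z - u) (by intro z _; fun_prop)
  simp only [aux_abs_log2]
  have e : (fun z : ℂ => 2 * Real.posLog ‖z - u‖ - Real.log ‖z - u‖) =
    fun z => (2:ℝ) • Real.posLog ‖z - u‖ - Real.log ‖z - u‖ := rfl
  have hip2 : CircleIntegrable (fun z => (2:ℝ) • Real.posLog ‖z - u‖) 0 R := hip.const_smul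
  rw [e, Real.circleAverage_fun_sub hip2 hi, Real.circleAverage_fun_smul,
    circleAverage_log_norm_sub_const_of_mem_closedBall
      (by rw [mem_closedBall_zero_iff, abs_of_pos hR0]; exact hu), smul_eq_mul]
  have h1 : Real.circleAverage (fun z => Real.posLog ‖z - u‖) 0 R ≤ Real.log (2 * R) := by
    apply Real.circleAverage_mono_on_of_le_circle hip
    intro z hz
    rw [abs_of_pos hR0, mem_sphere_zero_iff_norm] at hz
    have : ‖z - u‖ ≤ 2 * R := (norm_sub_le _ _).trans (by linarith)
    refine (Real.posLog_le_posLog (norm_nonneg _) this).trans (le_of_eq ?_)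
    rw [Real.posLog_eq_log]
    rw [abs_of_pos (by linarith)]; linarith
  have := Real.log_nonneg hR
  linarith

lemma aux_avg_abs_log {f : ℂ → ℂ} (hf : Meromorphic f) (R : ℝ) :
    Real.circleAverage (fun z => |Real.log ‖f z‖|) 0 R =
      ValueDistribution.proximity f ⊤ R + ValueDistribution.proximity f⁻¹ ⊤ R := by
  simp only [aux_abs_log]
  rw [ValueDistribution.proximity_top, ValueDistribution.proximity_top]
  have h1 : CircleIntegrable (fun z => Real.posLog ‖f z‖) 0 R :=
    MeromorphicOn.circleIntegrable_posLog_norm (fun z _ => hf z)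
  have h2 : CircleIntegrable (fun z => Real.posLog ‖f⁻¹ z‖) 0 R :=
    MeromorphicOn.circleIntegrable_posLog_norm (fun z _ => (hf z).inv)
  rw [← Real.circleAverage_fun_add h1 h2]
  simp

lemma aux_log_add {s : ℝ} (hs0 : 0 < s) (hs1 : s < 1) {x : ℝ} (hx : 0 ≤ x) :
    Real.log (1 + x) ≤ x ^ s / s := by
  have h1 : (1 + x) ^ s ≤ 1 + x ^ s := by
    have := Real.rpow_add_le_add_rpow zero_le_one hx hs0.le hs1.le
    simpa using this
  have h2 : s * Real.log (1 + x) ≤ x ^ s := by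
    rw [← Real.log_rpow (by linarith)]
    have h3 := Real.log_le_sub_one_of_pos (x := (1 + x) ^ s) (by positivity)
    linarith
  rw [le_div_iff₀ hs0]; linarith

lemma aux_log_diff {s : ℝ} (hs0 : 0 < s) (hs1 : s < 1) {x y c : ℂ} (hx : x ≠ 0) (hy : y ≠ 0)
    (hxy : y = x + c) :
    |Real.log ‖y‖ - Real.log ‖x‖| ≤ ‖c‖ ^ s / s * (‖x‖ ^ (-s) + ‖y‖ ^ (-s)) := by
  have key : ∀ a b : ℂ, a ≠ 0 → b ≠ 0 → ‖b‖ ≤ ‖a‖ + ‖c‖ →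
      Real.log ‖b‖ - Real.log ‖a‖ ≤ ‖c‖ ^ s / s * ‖a‖ ^ (-s) := by
    intro a b ha hb h
    have ha' := norm_pos_iff.2 ha
    have hb' := norm_pos_iff.2 hb
    rw [← Real.log_div hb'.ne' ha'.ne']
    have : ‖b‖ / ‖a‖ ≤ 1 + ‖c‖ / ‖a‖ := by
      rw [div_le_iff₀ ha']; field_simp; linarith
    refine (Real.log_le_log (by positivity) this).trans ?_
    refine (aux_log_add hs0 hs1 (by positivity)).trans (le_of_eq ?_)
    rw [Real.div_rpow (by positivity) (by positivity), Real.rpow_neg (by positivity)]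
    field_simp
  have k1 := key x y hx hy (by rw [hxy]; exact norm_add_le _ _)
  have k2 := key y x hy hx (by
    have : x = y - c := by rw [hxy]; ring
    rw [this]; exact norm_sub_le _ _)
  have p1 : 0 ≤ ‖c‖ ^ s / s * ‖x‖ ^ (-s) := by positivity
  have p2 : 0 ≤ ‖c‖ ^ s / s * ‖y‖ ^ (-s) := by positivity
  rw [abs_le, mul_add]
  constructor <;> linarith
lemma aux_codiscW_shift {P : Set ℂ} {U V : Set ℂ} (c : ℂ) (hP : P ∈ codiscreteWithin U)
    (hV : ∀ z ∈ V, z + c ∈ U) : (fun z => z + c) ⁻¹' P ∈ codiscreteWithin V := by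
  rw [mem_codiscreteWithin_iff_forall_mem_nhdsNE] at hP ⊢
  intro x hx
  have h1 := hP (x + c) (hV x hx)
  have ht : Tendsto (fun z => z + c) (𝓝[≠] x) (𝓝[≠] (x + c)) := by
    apply tendsto_nhdsWithin_of_tendsto_nhds_of_eventually_within
    · exact (continuous_id.add continuous_const).continuousAt.tendsto.mono_left nhdsWithin_le_nhds
    · filter_upwards [self_mem_nhdsWithin] with y hy
      simpa using hy
  filter_upwards [ht h1] with y hy
  by_cases hyV : y ∈ V
  · rcases hy with hy | hy
    · exact Or.inl hy
    · exact absurd (hV y hyV) hy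
  · exact Or.inr hyV

lemma aux_codiscW_ne {U : Set ℂ} (S : Finset ℂ) : {z : ℂ | z ∉ S} ∈ codiscreteWithin U := by
  rw [mem_codiscreteWithin_iff_forall_mem_nhdsNE]
  intro x _
  have h1 : ((S.erase x : Finset ℂ) : Set ℂ)ᶜ ∈ 𝓝 x :=
    (S.erase x).finite_toSet.isClosed.isOpen_compl.mem_nhds (by simp)
  filter_upwards [mem_nhdsWithin_of_mem_nhds h1, self_mem_nhdsWithin] with y hy hyx
  left
  intro hyS
  apply hy
  simp only [Finset.coe_erase, Set.mem_sdiff]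
  exact ⟨hyS, hyx⟩

lemma aux_factor {f : ℂ → ℂ} (hf : Meromorphic f) (hord : ∀ z, meromorphicOrderAt f z ≠ ⊤)
    (R : ℝ) : ∃ (S : Finset ℂ) (h : ℂ → ℝ), (∀ z ∈ S, ‖z‖ ≤ R) ∧
      InnerProductSpace.HarmonicOnNhd h (closedBall 0 R) ∧
      {x | Real.log ‖f x‖ = (∑ u ∈ S, (MeromorphicOn.divisor f Set.univ u : ℝ) *
        Real.log ‖x - u‖) + h x} ∈ codiscreteWithin (closedBall (0:ℂ) R) := by
  have hfU : MeromorphicOn f (closedBall 0 R) := fun z _ => hf z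
  have hfin : (MeromorphicOn.divisor f (closedBall 0 R)).support.Finite :=
    (MeromorphicOn.divisor f (closedBall 0 R)).finiteSupport (isCompact_closedBall 0 R)
  obtain ⟨g, hg, hg0, hfg⟩ := hfU.extract_zeros_poles (fun u => hord u) hfin
  have hlog := MeromorphicOn.extract_zeros_poles_log hg0 hfg
  have hmem : ∀ z ∈ hfin.toFinset, z ∈ closedBall (0:ℂ) R := by
    intro z hz
    rw [Set.Finite.mem_toFinset] at hz
    exact (MeromorphicOn.divisor f (closedBall 0 R)).supportWithinDomain hz
  refine ⟨hfin.toFinset, fun x => Real.log ‖g x‖, ?_, ?_, ?_⟩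
  · intro z hz
    simpa using hmem z hz
  · intro z hz
    exact (hg z hz).harmonicAt_log_norm (hg0 ⟨z, hz⟩)
  · filter_upwards [hlog] with x hx
    rw [hx, Pi.add_apply, finsum_eq_sum_of_support_subset (s := hfin.toFinset), Finset.sum_apply]
    · congr 1
      refine Finset.sum_congr rfl fun u hu => ?_
      rw [MeromorphicOn.divisor_apply hfU (hmem u hu),
        MeromorphicOn.divisor_apply (fun z _ => hf z) (Set.mem_univ u)]
    · intro u hu
      rw [Set.Finite.coe_toFinset]
      intro h0
      apply hu
      funext x
      simp [h0]

lemma aux_main {f : ℂ → ℂ} (hf : Meromorphic f) (hord : ∀ z, meromorphicOrderAt f z ≠ ⊤)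
    {s K : ℝ} (hs0 : 0 < s) (hs1 : s < 1)
    (hK : ∀ r : ℝ, 0 < r → ∀ a : ℂ, CircleIntegrable (fun z => ‖z - a‖ ^ (-s)) 0 r ∧
      Real.circleAverage (fun z => ‖z - a‖ ^ (-s)) 0 r ≤ K * r ^ (-s))
    {r R : ℝ} {c : ℂ} (hr : 0 < r) (hR : r + ‖c‖ < R) (hR1 : 1 ≤ R) :
    ∃ S : Finset ℂ, (∀ z ∈ S, ‖z‖ ≤ R) ∧
      nevm (fun z => f (z + c) / f z) r ≤
        2 * R * ‖c‖ / (R - (r + ‖c‖)) ^ 2 *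
          (ValueDistribution.proximity f ⊤ R + ValueDistribution.proximity f⁻¹ ⊤ R +
            (∑ z ∈ S, |(MeromorphicOn.divisor f Set.univ z : ℝ)|) * (2 * Real.log (2 * R))) +
        (∑ z ∈ S, |(MeromorphicOn.divisor f Set.univ z : ℝ)|) *
          (‖c‖ ^ s / s * (2 * K * r ^ (-s))) := by
  obtain ⟨S, h, hS, hh, hlog⟩ := aux_factor hf hord R
  refine ⟨S, hS, ?_⟩
  have hR0 : 0 < R := by linarith
  set d : ℂ → ℝ := fun u => (MeromorphicOn.divisor f Set.univ u : ℝ) with hd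
  change {x | Real.log ‖f x‖ = (∑ u ∈ S, d u * Real.log ‖x - u‖) + h x} ∈ _ at hlog
  change _ ≤ _ * (_ + (∑ z ∈ S, |d z|) * _) + (∑ z ∈ S, |d z|) * _
  -- average of h
  have havg : Real.circleAverage (fun z => |h z|) 0 R ≤
      ValueDistribution.proximity f ⊤ R + ValueDistribution.proximity f⁻¹ ⊤ R +
            (∑ z ∈ S, |d z|) * (2 * Real.log (2 * R)) := by
    have hsub : sphere (0:ℂ) |R| ⊆ closedBall 0 R := by
      rw [abs_of_pos hR0]; exact sphere_subset_closedBall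
    have hlogS := codiscreteWithin_mono hsub hlog
    have hcont : ContinuousOn (fun z => |h z|) (sphere 0 |R|) := fun z hz =>
      (hh z (hsub hz)).1.continuousAt.abs.continuousWithinAt
    set B : ℂ → ℝ := fun z => |Real.log ‖f z‖| + ∑ u ∈ S, |d u| • |Real.log ‖z - u‖| with hB
    have hi1 : CircleIntegrable (fun z => |Real.log ‖f z‖|) 0 R :=
      (MeromorphicOn.circleIntegrable_log_norm (fun z _ => hf z)).abs
    have hi2 : ∀ u ∈ S, CircleIntegrable (fun z => |d u| • |Real.log ‖z - u‖|) 0 R := by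
      intro u _
      have h1 : CircleIntegrable (fun z => Real.log ‖z - u‖) 0 R :=
        circleIntegrable_log_norm_sub_const R
      exact h1.abs.const_smul
    have hi3 : CircleIntegrable (fun z => ∑ u ∈ S, |d u| • |Real.log ‖z - u‖|) 0 R :=
      CircleIntegrable.fun_sum S hi2
    have hBi : CircleIntegrable B 0 R := hi1.add hi3
    have hmin : (fun z => |h z|) =ᶠ[codiscreteWithin (sphere 0 |R|)] fun z => min |h z| (B z) := by
      filter_upwards [hlogS] with z hz
      rw [min_eq_left]
      have e : h z = Real.log ‖f z‖ - ∑ u ∈ S, d u * Real.log ‖z - u‖ := by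
        have hz' : Real.log ‖f z‖ = (∑ u ∈ S, d u * Real.log ‖z - u‖) + h z := hz
        linarith
      rw [e]
      refine (abs_sub _ _).trans ?_
      simp only [hB]
      gcongr
      refine (Finset.abs_sum_le_sum_abs _ _).trans (le_of_eq ?_)
      simp [abs_mul]
    have hmi : CircleIntegrable (fun z => min |h z| (B z)) 0 R :=
      CircleIntegrable.congr_codiscreteWithin hmin hcont.circleIntegrable'
    rw [Real.circleAverage_congr_codiscreteWithin hmin hR0.ne']
    refine (Real.circleAverage_mono hmi hBi fun z _ => min_le_right _ _).trans ?_
    simp only [hB]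
    rw [Real.circleAverage_fun_add hi1 hi3, aux_avg_abs_log hf, Real.circleAverage_fun_sum hi2,
      Finset.sum_mul]
    gcongr with u hu
    rw [Real.circleAverage_fun_smul, smul_eq_mul]
    gcongr
    exact aux_avg_log_sub hR1 (hS u hu)
  set A := 2 * R * ‖c‖ / (R - (r + ‖c‖)) ^ 2 *
    (ValueDistribution.proximity f ⊤ R + ValueDistribution.proximity f⁻¹ ⊤ R +
            (∑ z ∈ S, |d z|) * (2 * Real.log (2 * R))) with hA
  have hpois : ∀ w : ℂ, ‖w‖ = r → |h (w + c) - h w| ≤ A := by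
    intro w hw
    have hc := norm_nonneg c
    refine (aux_poisson (ρ := r + ‖c‖) hh (by linarith) ((norm_add_le _ _).trans (by linarith))
      hR).trans ?_
    rw [hA]
    gcongr
  rw [aux_nevm]
  set C1 := ‖c‖ ^ s / s with hC1
  have hC1n : 0 ≤ C1 := by positivity
  have hsph : ∀ z ∈ sphere (0:ℂ) |r|, ‖z‖ = r := by
    intro z hz
    rw [abs_of_pos hr, mem_sphere_zero_iff_norm] at hz
    exact hz
  have hc := norm_nonneg c
  have hs1' : ∀ z ∈ sphere (0:ℂ) |r|, z ∈ closedBall (0:ℂ) R := by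
    intro z hz
    rw [mem_closedBall_zero_iff, hsph z hz]; linarith
  have hs2' : ∀ z ∈ sphere (0:ℂ) |r|, z + c ∈ closedBall (0:ℂ) R := by
    intro z hz
    rw [mem_closedBall_zero_iff]
    refine (norm_add_le _ _).trans ?_
    rw [hsph z hz]; linarith
  have g1 := codiscreteWithin_mono hs1' hlog
  have g2 := aux_codiscW_shift c hlog hs2'
  have g3 : {z : ℂ | z ∉ S} ∈ codiscreteWithin (sphere (0:ℂ) |r|) := aux_codiscW_ne S
  have g4 := aux_codiscW_shift c (aux_codiscW_ne (U := Set.univ) S)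
    (V := sphere (0:ℂ) |r|) (fun _ _ => Set.mem_univ _)
  have g5 := self_mem_codiscreteWithin (sphere (0:ℂ) |r|)
  set B : ℂ → ℝ := fun z => A + ∑ u ∈ S, (|d u| * C1) • (‖z - u‖ ^ (-s) + ‖z - (u - c)‖ ^ (-s))
    with hB
  have hi2 : ∀ u ∈ S, CircleIntegrable
      (fun z => (|d u| * C1) • (‖z - u‖ ^ (-s) + ‖z - (u - c)‖ ^ (-s))) 0 r := by
    intro u _
    exact ((hK r hr u).1.add (hK r hr (u - c)).1).const_smul
  have hi3 : CircleIntegrable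
      (fun z => ∑ u ∈ S, (|d u| * C1) • (‖z - u‖ ^ (-s) + ‖z - (u - c)‖ ^ (-s))) 0 r :=
    CircleIntegrable.fun_sum S hi2
  have hBi : CircleIntegrable B 0 r := (circleIntegrable_const A 0 r).add hi3
  have hFi : CircleIntegrable (fun z => Real.posLog ‖f (z + c) / f z‖) 0 r := by
    apply MeromorphicOn.circleIntegrable_posLog_norm (f := fun z => f (z + c) / f z)
    intro z _
    have h1 : MeromorphicAt (fun z => f (z + c)) z := by
      apply MeromorphicAt.comp_analyticAt (f := f) (g := fun z => z + c) (hf (z + c))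
      fun_prop
    exact h1.div (hf z)
  have hA0 : 0 ≤ A := by
    have := hpois (r : ℂ) (by simp [abs_of_pos hr])
    exact (abs_nonneg _).trans this
  have hmin : (fun z => Real.posLog ‖f (z + c) / f z‖) =ᶠ[codiscreteWithin (sphere 0 |r|)]
      fun z => min (Real.posLog ‖f (z + c) / f z‖) (B z) := by
    filter_upwards [g1, g2, g3, g4, g5] with z g1 g2 g3 g4 g5
    rw [min_eq_left]
    have hB0 : 0 ≤ B z := by
      simp only [hB]
      positivity
    by_cases hz1 : f z = 0
    · simpa [hz1] using hB0
    by_cases hz2 : f (z + c) = 0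
    · simpa [hz2] using hB0
    rw [Real.posLog]
    apply max_le hB0
    rw [norm_div, Real.log_div (by simpa using hz2) (by simpa using hz1)]
    have g1' : Real.log ‖f z‖ = (∑ u ∈ S, d u * Real.log ‖z - u‖) + h z := g1
    have g2' : Real.log ‖f (z + c)‖ = (∑ u ∈ S, d u * Real.log ‖z + c - u‖) + h (z + c) := g2
    rw [g1', g2']
    have k1 : h (z + c) - h z ≤ A := (le_abs_self _).trans (hpois z (hsph z g5))
    have k2 : ∑ u ∈ S, d u * Real.log ‖z + c - u‖ - ∑ u ∈ S, d u * Real.log ‖z - u‖ ≤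
        ∑ u ∈ S, (|d u| * C1) • (‖z - u‖ ^ (-s) + ‖z - (u - c)‖ ^ (-s)) := by
      rw [← Finset.sum_sub_distrib]
      refine Finset.sum_le_sum fun u hu => ?_
      rw [← mul_sub, smul_eq_mul, mul_assoc]
      refine (le_abs_self _).trans ?_
      rw [abs_mul]
      gcongr
      have e : z - (u - c) = z + c - u := by ring
      rw [e]
      apply aux_log_diff hs0 hs1
      · intro h0
        apply g3
        rw [sub_eq_zero.1 h0]; exact hu
      · intro h0
        apply g4
        simp only
        rw [sub_eq_zero.1 h0]; exact hu
      · ring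
    simp only [hB]
    linarith
  have hmi := CircleIntegrable.congr_codiscreteWithin hmin hFi
  rw [Real.circleAverage_congr_codiscreteWithin hmin hr.ne']
  refine (Real.circleAverage_mono hmi hBi fun z _ => min_le_right _ _).trans ?_
  simp only [hB]
  rw [Real.circleAverage_fun_add (circleIntegrable_const A 0 r) hi3, Real.circleAverage_const,
    Real.circleAverage_fun_sum hi2, Finset.sum_mul]
  gcongr with u hu
  rw [Real.circleAverage_fun_smul, smul_eq_mul, mul_assoc,
    Real.circleAverage_fun_add (hK r hr u).1 (hK r hr (u - c)).1]
  gcongr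
  linarith [(hK r hr u).2, (hK r hr (u - c)).2]
lemma aux_sum1 {a : ℕ → ℝ} {C : ℝ} (hm : Monotone a) (h0 : ∀ j, 0 ≤ a j)
    (hC : ∀ j, a j ≤ C * ((j:ℝ) + 1) ^ (1/2 : ℝ)) :
    Summable (fun j : ℕ => (a (j + 1) - a j) / ((j:ℝ) + 1)) := by
  have hs : Summable (fun j : ℕ => C * ((j:ℝ) + 1) ^ (-(3/2) : ℝ)) := by
    apply Summable.mul_left
    have h1 : Summable (fun j : ℕ => (j:ℝ) ^ (-(3/2) : ℝ)) :=
      Real.summable_nat_rpow.2 (by norm_num)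
    have := (summable_nat_add_iff 1).2 h1
    simpa using this
  have hCn : 0 ≤ C := by
    have := (h0 0).trans (hC 0)
    simpa using this
  have hterm : ∀ j : ℕ, a (j + 1) / (((j:ℝ) + 1) * ((j:ℝ) + 2)) ≤
      C * ((j:ℝ) + 1) ^ (-(3/2) : ℝ) := by
    intro j
    have hj : (0:ℝ) < (j:ℝ) + 1 := by positivity
    have hj2 : (0:ℝ) < (j:ℝ) + 2 := by positivity
    have h1 := hC (j + 1)
    push_cast at h1
    have e2 : (j:ℝ) + 1 + 1 = j + 2 := by ring
    rw [e2] at h1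
    calc a (j + 1) / (((j:ℝ) + 1) * ((j:ℝ) + 2))
        ≤ C * ((j:ℝ) + 2) ^ (1/2 : ℝ) / (((j:ℝ) + 1) * ((j:ℝ) + 2)) := by gcongr
      _ = C * (((j:ℝ) + 1) ^ (-1 : ℝ) * ((j:ℝ) + 2) ^ (-(1/2) : ℝ)) := by
          have : ((j:ℝ) + 2) ^ (-(1/2) : ℝ) = ((j:ℝ) + 2) ^ (1/2 : ℝ) / ((j:ℝ) + 2) := by
            rw [← Real.rpow_sub_one hj2.ne']; norm_num
          rw [this, Real.rpow_neg_one]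
          field_simp
      _ ≤ C * (((j:ℝ) + 1) ^ (-1 : ℝ) * ((j:ℝ) + 1) ^ (-(1/2) : ℝ)) := by
          gcongr C * (_ * ?_)
          apply Real.rpow_le_rpow_of_nonpos hj (by linarith) (by norm_num)
      _ = C * ((j:ℝ) + 1) ^ (-(3/2) : ℝ) := by
          rw [← Real.rpow_add hj]; norm_num
  apply summable_of_sum_range_le (c := C + ∑' j : ℕ, C * ((j:ℝ) + 1) ^ (-(3/2) : ℝ))
  · intro j
    have := hm (Nat.le_succ j)
    apply div_nonneg (by simpa using this) (by positivity)
  · intro n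
    have e : ∀ j : ℕ, (a (j + 1) - a j) / ((j:ℝ) + 1) =
        (a (j + 1) / (((j + 1 : ℕ) : ℝ) + 1) - a j / ((j:ℝ) + 1)) +
          a (j + 1) / (((j:ℝ) + 1) * ((j:ℝ) + 2)) := by
      intro j
      push_cast
      have hj : (j:ℝ) + 1 ≠ 0 := by positivity
      have hj2 : (j:ℝ) + 2 ≠ 0 := by positivity
      have e2 : (j:ℝ) + 1 + 1 = j + 2 := by ring
      rw [e2]
      field_simp
      ring
    simp only [e]
    rw [Finset.sum_add_distrib, Finset.sum_range_sub (fun j : ℕ => a j / ((j:ℝ) + 1))]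
    have h1 : a n / ((n:ℝ) + 1) ≤ C := by
      rw [div_le_iff₀ (by positivity)]
      refine (hC n).trans ?_
      gcongr
      have : (1:ℝ) ≤ (n:ℝ) + 1 := by have := Nat.cast_nonneg (α := ℝ) n; linarith
      calc ((n:ℝ) + 1) ^ (1/2 : ℝ) ≤ ((n:ℝ) + 1) ^ (1 : ℝ) :=
            Real.rpow_le_rpow_of_exponent_le this (by norm_num)
        _ = _ := Real.rpow_one _
    have h2 : 0 ≤ a 0 / (((0:ℕ):ℝ) + 1) := div_nonneg (h0 0) (by positivity)
    have h3 : ∑ j ∈ Finset.range n, a (j + 1) / (((j:ℝ) + 1) * ((j:ℝ) + 2)) ≤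
        ∑' j : ℕ, C * ((j:ℝ) + 1) ^ (-(3/2) : ℝ) := by
      refine (Finset.sum_le_sum fun j _ => hterm j).trans ?_
      exact hs.sum_le_tsum _ (fun j _ => by positivity)
    linarith

lemma aux_sum3 {a : ℕ → ℝ} {C : ℝ} (hm : Monotone a) (h0 : ∀ j, 0 ≤ a j)
    (hC : ∀ j, a j ≤ C * ((j:ℝ) + 1) ^ (1/2 : ℝ)) :
    Summable (fun j : ℕ => (a (j + 3) - a j) / ((j:ℝ) + 1)) := by
  have h := aux_sum1 hm h0 hC
  have h1 := (summable_nat_add_iff 1).2 h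
  have h2 := (summable_nat_add_iff 2).2 h
  refine Summable.of_nonneg_of_le ?_ ?_ (h.add ((h1.mul_left 2).add (h2.mul_left 3)))
  · intro j
    have := hm (show j ≤ j + 3 by omega)
    apply div_nonneg (by simpa using this) (by positivity)
  · intro j
    have m1 : 0 ≤ a (j + 1 + 1) - a (j + 1) := by
      have := hm (show j + 1 ≤ j + 1 + 1 by omega); linarith
    have m2 : 0 ≤ a (j + 2 + 1) - a (j + 2) := by
      have := hm (show j + 2 ≤ j + 2 + 1 by omega); linarith
    push_cast
    have hj := Nat.cast_nonneg (α := ℝ) j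
    have e : (a (j + 3) - a j) / ((j:ℝ) + 1) = (a (j + 1) - a j) / ((j:ℝ) + 1) +
        ((a (j + 1 + 1) - a (j + 1)) / ((j:ℝ) + 1) +
          (a (j + 2 + 1) - a (j + 2)) / ((j:ℝ) + 1)) := by ring_nf
    rw [e]
    gcongr
    · rw [mul_div_assoc', div_le_div_iff₀ (by positivity) (by positivity)]
      nlinarith
    · rw [mul_div_assoc', div_le_div_iff₀ (by positivity) (by positivity)]
      nlinarith

lemma aux_pow_bound (p : ℕ) {x : ℝ} (hx0 : 0 ≤ x) (hx1 : x ≤ 1) :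
    (1 + x) ^ p ≤ 1 + 3 ^ p * x := by
  induction p with
  | zero => simpa using hx0
  | succ p ih =>
    rw [pow_succ]
    have h3 : (1:ℝ) ≤ 3 ^ p := one_le_pow₀ (by norm_num)
    calc (1 + x) ^ p * (1 + x) ≤ (1 + 3 ^ p * x) * (1 + x) := by gcongr
      _ ≤ 1 + 3 ^ (p + 1) * x := by
        rw [pow_succ]
        nlinarith [mul_nonneg hx0 (sub_nonneg.2 hx1), mul_nonneg (by positivity : (0:ℝ) ≤ 3 ^ p)
          (mul_nonneg hx0 (sub_nonneg.2 hx1)), mul_nonneg hx0 (sub_nonneg.2 h3)]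

lemma aux_growth {T : ℝ → ℝ} (hm : MonotoneOn T (Set.Ioi 0)) (ht : Tendsto T atTop atTop)
    {K : ℝ} (hK : ∀ᶠ r in atTop, Real.log (T r) ≤ K * Real.log r) {p : ℕ} (hp : 1 ≤ p)
    {c : ℝ} (hc : 0 ≤ c) :
    ∃ E : Set ℝ, FinLogMeasure E ∧ ∃ k0 : ℕ, ∀ k : ℕ, k0 ≤ k → ∀ r : ℝ, 0 < r → r ∉ E →
      (k:ℝ) ^ p ≤ r + c → r + c < ((k:ℝ) + 1) ^ p →
        T (((k:ℝ) + 3) ^ p) ≤ 2 * T ((k:ℝ) ^ p) := by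
  have hev : ∀ᶠ r in atTop, 1 ≤ T r ∧ Real.log (T r) ≤ K * Real.log r ∧ 2 * c ≤ r :=
    (ht.eventually_ge_atTop 1).and (hK.and (eventually_ge_atTop _))
  obtain ⟨r0, hr0⟩ := eventually_atTop.1 hev
  obtain ⟨k0, hk0⟩ := exists_nat_ge (max r0 1)
  have hk1 : (1:ℝ) ≤ k0 := (le_max_right _ _).trans hk0
  have hkp : ∀ j : ℕ, r0 ≤ ((j + k0 : ℕ) : ℝ) ^ p := by
    intro j
    have h1 : (k0:ℝ) ≤ ((j + k0 : ℕ) : ℝ) := by push_cast; linarith [Nat.cast_nonneg (α := ℝ) j]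
    have h2 : ((j + k0 : ℕ) : ℝ) ≤ ((j + k0 : ℕ) : ℝ) ^ p :=
      le_self_pow₀ (hk1.trans h1) (by omega)
    exact (le_max_left _ _).trans (hk0.trans (h1.trans h2))
  set a : ℕ → ℝ := fun j => Real.log (T (((j + k0 : ℕ) : ℝ) ^ p)) with ha
  have hpos : ∀ j : ℕ, (0:ℝ) < ((j + k0 : ℕ) : ℝ) := by
    intro j
    push_cast; linarith [Nat.cast_nonneg (α := ℝ) j]
  have ham : Monotone a := by
    intro i j hij
    simp only [ha]
    apply Real.log_le_log (by linarith [(hr0 _ (hkp i)).1])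
    apply hm
    · exact pow_pos (hpos i) p
    · exact pow_pos (hpos j) p
    · have : ((i + k0 : ℕ) : ℝ) ≤ ((j + k0 : ℕ) : ℝ) := by exact_mod_cast Nat.add_le_add_right hij k0
      have := hpos i
      gcongr
  have ha0 : ∀ j, 0 ≤ a j := fun j => Real.log_nonneg (hr0 _ (hkp j)).1
  have haC : ∀ j, a j ≤ (|K| * p * (Real.log k0 + 2)) * ((j:ℝ) + 1) ^ (1/2 : ℝ) := by
    intro j
    have hj := Nat.cast_nonneg (α := ℝ) j
    have hj1 : (1:ℝ) ≤ (j:ℝ) + 1 := by linarith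
    have h1 : a j ≤ K * (p * Real.log ((j + k0 : ℕ) : ℝ)) := by
      have := (hr0 _ (hkp j)).2.1
      rwa [Real.log_pow] at this
    have h2 : ((j + k0 : ℕ) : ℝ) ≤ k0 * ((j:ℝ) + 1) := by push_cast; nlinarith
    have h3 : Real.log ((j + k0 : ℕ) : ℝ) ≤ Real.log k0 + Real.log ((j:ℝ) + 1) := by
      rw [← Real.log_mul (by linarith) (by linarith)]
      exact Real.log_le_log (hpos j) h2
    have h4 : Real.log ((j:ℝ) + 1) ≤ 2 * ((j:ℝ) + 1) ^ (1/2 : ℝ) := by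
      have := Real.log_le_rpow_div (x := (j:ℝ) + 1) (ε := 1/2) (by linarith) (by norm_num)
      linarith
    have h5 : 1 ≤ ((j:ℝ) + 1) ^ (1/2 : ℝ) := Real.one_le_rpow hj1 (by norm_num)
    have h6 : 0 ≤ Real.log ((j + k0 : ℕ) : ℝ) := by
      apply Real.log_nonneg; push_cast; linarith
    have h7 : 0 ≤ Real.log k0 := Real.log_nonneg hk1
    calc a j ≤ K * (p * Real.log ((j + k0 : ℕ) : ℝ)) := h1
      _ ≤ |K| * (p * Real.log ((j + k0 : ℕ) : ℝ)) := by gcongr; exact le_abs_self K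
      _ ≤ |K| * (p * ((Real.log k0 + 2) * ((j:ℝ) + 1) ^ (1/2 : ℝ))) := by
          gcongr
          nlinarith
      _ = _ := by ring
  have hsum := aux_sum3 ham ha0 haC
  set bad : Set ℕ := {j | 2 * T (((j + k0 : ℕ) : ℝ) ^ p) < T ((((j + k0 : ℕ) : ℝ) + 3) ^ p)}
    with hbad
  set Ej : ℕ → Set ℝ := fun j => {r | 0 < r ∧ j ∈ bad ∧ ((j + k0 : ℕ) : ℝ) ^ p ≤ r + c ∧
    r + c < (((j + k0 : ℕ) : ℝ) + 1) ^ p} with hEj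
  have hint : ∀ j, ∫⁻ r in Ej j, ENNReal.ofReal r⁻¹ ≤
      ENNReal.ofReal ((2 * 3 ^ p / Real.log 2) * ((a (j + 3) - a j) / ((j:ℝ) + 1))) := by
    intro j
    by_cases hj : j ∈ bad
    swap
    · have : Ej j = ∅ := by
        ext r; simp [hEj, hj]
      rw [this]; simp
    set x : ℝ := ((j + k0 : ℕ) : ℝ) with hx
    have hxp : 0 < x := hpos j
    have hx1 : 1 ≤ x := by rw [hx]; push_cast; linarith [Nat.cast_nonneg (α := ℝ) j]
    have hxpp : 0 < x ^ p := pow_pos hxp p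
    have h2c : 2 * c ≤ x ^ p := (hr0 _ (hkp j)).2.2
    have hsub : Ej j ⊆ Set.Ico (x ^ p - c) ((x + 1) ^ p - c) := by
      intro r hr
      exact ⟨by linarith [hr.2.2.1], by linarith [hr.2.2.2]⟩
    have h1 : ∫⁻ r in Ej j, ENNReal.ofReal r⁻¹ ≤
        ∫⁻ r in Set.Ico (x ^ p - c) ((x + 1) ^ p - c), ENNReal.ofReal (2 / x ^ p) := by
      refine (lintegral_mono_set hsub).trans ?_
      apply setLIntegral_mono' measurableSet_Ico
      intro r hr
      apply ENNReal.ofReal_le_ofReal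
      have : x ^ p / 2 ≤ r := by linarith [hr.1]
      calc r⁻¹ ≤ (x ^ p / 2)⁻¹ := by gcongr
        _ = 2 / x ^ p := by rw [inv_div]
    refine h1.trans ?_
    rw [setLIntegral_const, Real.volume_Ico, ← ENNReal.ofReal_mul (by positivity)]
    apply ENNReal.ofReal_le_ofReal
    have e1 : (x + 1) ^ p = x ^ p * (1 + 1 / x) ^ p := by
      rw [← mul_pow]; congr 1; field_simp
    have h2 : (x + 1) ^ p - c - (x ^ p - c) ≤ x ^ p * (3 ^ p * (1 / x)) := by
      have := aux_pow_bound p (x := 1 / x) (by positivity) (by rw [div_le_one hxp]; exact hx1)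
      rw [e1]
      nlinarith
    have hlog2 : 0 < Real.log 2 := Real.log_pos (by norm_num)
    have h3 : Real.log 2 ≤ a (j + 3) - a j := by
      have hT := (hr0 _ (hkp j)).1
      have hb : 2 * T (x ^ p) < T ((x + 3) ^ p) := hj
      have e3 : a (j + 3) = Real.log (T ((x + 3) ^ p)) := by
        simp only [ha, hx]; congr 3; push_cast; ring
      rw [e3]
      have h4 : Real.log (2 * T (x ^ p)) ≤ Real.log (T ((x + 3) ^ p)) :=
        Real.log_le_log (by positivity) hb.le
      rw [Real.log_mul (by norm_num) (by positivity)] at h4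
      change _ ≤ _ - Real.log (T (x ^ p))
      linarith
    have hjx : (j:ℝ) + 1 ≤ x := by rw [hx]; push_cast; linarith
    calc 2 / x ^ p * ((x + 1) ^ p - c - (x ^ p - c)) ≤ 2 / x ^ p * (x ^ p * (3 ^ p * (1 / x))) := by
          gcongr
      _ = (2 * 3 ^ p / Real.log 2) * (Real.log 2 / x) := by field_simp
      _ ≤ _ := by
          have := Nat.cast_nonneg (α := ℝ) j
          gcongr
          linarith
  refine ⟨⋃ j, Ej j, ⟨?_, ?_⟩, k0, ?_⟩
  · intro r hr
    obtain ⟨j, hj⟩ := Set.mem_iUnion.1 hr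
    exact hj.1
  · refine (lintegral_iUnion_le _ _).trans_lt ?_
    refine (ENNReal.tsum_le_tsum hint).trans_lt ?_
    exact (hsum.mul_left _).tsum_ofReal_lt_top
  · intro k hk r hr hrE h1 h2
    by_contra hcon
    push Not at hcon
    apply hrE
    obtain ⟨j, rfl⟩ := Nat.exists_eq_add_of_le' hk
    exact Set.mem_iUnion.2 ⟨j, hr, hcon, h1, h2⟩
lemma aux_bound {f : ℂ → ℂ} (hf : Meromorphic f)
    (hn : ¬ ∃ a : ℂ, f =ᶠ[codiscrete ℂ] fun _ => a) (c : ℂ) {s : ℝ} (hs0 : 0 < s) (hs1 : s < 1) :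
    ∃ C : ℝ, 0 ≤ C ∧ ∀ r R R' : ℝ, 0 < r → r + ‖c‖ < R → R < R' → 1 ≤ R →
      1 ≤ ValueDistribution.characteristic f ⊤ R →
      nevm (fun z => f (z + c) / f z) r ≤ C * ValueDistribution.characteristic f ⊤ R' *
        (R / (R - (r + ‖c‖)) ^ 2 * (1 + Real.log (2 * R) / Real.log (R' / R)) +
          r ^ (-s) / Real.log (R' / R)) := by
  obtain ⟨K, hK0, hK⟩ := aux_circ_bound hs0 hs1
  set C0 := max |Real.log ‖f 0‖| |Real.log ‖meromorphicTrailingCoeffAt f 0‖| with hC0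
  have hC00 : 0 ≤ C0 := (abs_nonneg _).trans (le_max_left _ _)
  set C1 := ‖c‖ ^ s / s with hC1
  have hC1n : 0 ≤ C1 := by positivity
  refine ⟨(2 + C0) * (4 * ‖c‖ + 2 * C1 * K), by positivity, ?_⟩
  intro r R R' hr hR hRR hR1 hT1
  obtain ⟨S, hS, hbd⟩ := aux_main hf (aux_order_ne_top hf hn) hs0 hs1 hK hr hR hR1
  have hcount := aux_count2 (f := f) hR1 hRR S hS
  set n := ∑ z ∈ S, |(MeromorphicOn.divisor f Set.univ z : ℝ)| with hnn
  set T := ValueDistribution.characteristic f ⊤ with hT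
  have hsum : ∀ ρ : ℝ, 1 ≤ ρ → 1 ≤ T ρ →
      0 ≤ ValueDistribution.proximity f ⊤ ρ ∧ 0 ≤ ValueDistribution.proximity f⁻¹ ⊤ ρ ∧
      0 ≤ ValueDistribution.logCounting f ⊤ ρ ∧ 0 ≤ ValueDistribution.logCounting f⁻¹ ⊤ ρ ∧
      (ValueDistribution.proximity f ⊤ ρ + ValueDistribution.logCounting f ⊤ ρ) +
      (ValueDistribution.proximity f⁻¹ ⊤ ρ + ValueDistribution.logCounting f⁻¹ ⊤ ρ) ≤
        (2 + C0) * T ρ := by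
    intro ρ hρ h1
    have h4 := abs_le.1 (ValueDistribution.characteristic_sub_characteristic_inv_le hf (R := ρ))
    have e1 : T ρ = ValueDistribution.proximity f ⊤ ρ + ValueDistribution.logCounting f ⊤ ρ := rfl
    have e2 : ValueDistribution.characteristic f⁻¹ ⊤ ρ =
      ValueDistribution.proximity f⁻¹ ⊤ ρ + ValueDistribution.logCounting f⁻¹ ⊤ ρ := rfl
    refine ⟨ValueDistribution.proximity_nonneg (f := f) (a := ⊤) ρ,
      ValueDistribution.proximity_nonneg (f := f⁻¹) (a := ⊤) ρ,
      ValueDistribution.logCounting_nonneg hρ, ValueDistribution.logCounting_nonneg hρ, ?_⟩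
    rw [← e1, ← e2]
    have : T ρ - ValueDistribution.characteristic f⁻¹ ⊤ ρ ≥ -C0 := h4.1
    nlinarith
  have hmono : T R ≤ T R' := ValueDistribution.characteristic_monotoneOn hf
    (show R ∈ Set.Ioi 0 by simp only [Set.mem_Ioi]; linarith) (show R' ∈ Set.Ioi 0 by simp only [Set.mem_Ioi]; linarith) hRR.le
  have a1 := hsum R hR1 hT1
  have a2 := hsum R' (by linarith) (by linarith)
  set L := Real.log (R' / R) with hL
  have hLp : 0 < L := Real.log_pos (by rw [one_lt_div (by linarith)]; exact hRR)
  have hn1 : n ≤ (2 + C0) * T R' / L := by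
    rw [le_div_iff₀ hLp]
    linarith
  have hp1 : ValueDistribution.proximity f ⊤ R + ValueDistribution.proximity f⁻¹ ⊤ R ≤
      (2 + C0) * T R' := by
    have : (2 + C0) * T R ≤ (2 + C0) * T R' := by gcongr
    linarith
  have hT0 : 0 ≤ T R' := by linarith
  have hl2 : 0 ≤ Real.log (2 * R) := Real.log_nonneg (by linarith)
  have hrs : 0 ≤ r ^ (-s) := by positivity
  refine hbd.trans ?_
  calc _ ≤ 2 * R * ‖c‖ / (R - (r + ‖c‖)) ^ 2 *
          ((2 + C0) * T R' + ((2 + C0) * T R' / L) * (2 * Real.log (2 * R))) +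
        ((2 + C0) * T R' / L) * (C1 * (2 * K * r ^ (-s))) := by gcongr
    _ = (2 + C0) * T R' * (2 * ‖c‖ * (R / (R - (r + ‖c‖)) ^ 2 *
          (1 + 2 * (Real.log (2 * R) / L))) + 2 * C1 * K * (r ^ (-s) / L)) := by
        ring
    _ ≤ (2 + C0) * T R' * ((4 * ‖c‖) * (R / (R - (r + ‖c‖)) ^ 2 *
          (1 + Real.log (2 * R) / L)) + 2 * C1 * K * (r ^ (-s) / L)) := by
        gcongr ?_ * (?_ + _)
        have : 0 ≤ Real.log (2 * R) / L := by positivity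
        have h3 : 2 * ‖c‖ * (R / (R - (r + ‖c‖)) ^ 2 * (1 + 2 * (Real.log (2 * R) / L))) =
          ‖c‖ * (R / (R - (r + ‖c‖)) ^ 2) * (2 + 4 * (Real.log (2 * R) / L)) := by ring
        have h4 : 4 * ‖c‖ * (R / (R - (r + ‖c‖)) ^ 2 * (1 + (Real.log (2 * R) / L))) =
          ‖c‖ * (R / (R - (r + ‖c‖)) ^ 2) * (4 + 4 * (Real.log (2 * R) / L)) := by ring
        rw [h3, h4]
        gcongr
        linarith
    _ ≤ (2 + C0) * T R' * ((4 * ‖c‖ + 2 * C1 * K) * (R / (R - (r + ‖c‖)) ^ 2 *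
          (1 + Real.log (2 * R) / L)) + (4 * ‖c‖ + 2 * C1 * K) * (r ^ (-s) / L)) := by
        gcongr ?_ * (?_ * ?_ + ?_ * ?_)
        · have : 0 ≤ C1 * K := by positivity
          linarith
        · have := norm_nonneg c
          linarith
    _ = _ := by ring

lemma aux_est {δ : ℝ} (hδ0 : 0 ≤ δ) (hδ : δ < 1) {p : ℕ} (hp1 : 1 ≤ p)
    (hp : 5 ≤ (p:ℝ) * (1 - δ)) {k : ℕ} (hk : 1 ≤ k) {r c : ℝ} (hr1 : 1 ≤ r) (hc : 0 ≤ c)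
    (hcr : c ≤ r) (h1 : (k:ℝ) ^ p ≤ r + c) (h2 : r + c < ((k:ℝ) + 1) ^ p) :
    r ^ δ * (((k:ℝ) + 2) ^ p / (((k:ℝ) + 2) ^ p - (r + c)) ^ 2 *
      (1 + Real.log (2 * ((k:ℝ) + 2) ^ p) / Real.log (((k:ℝ) + 3) ^ p / ((k:ℝ) + 2) ^ p)) +
        r ^ (-((1 + δ) / 2)) / Real.log (((k:ℝ) + 3) ^ p / ((k:ℝ) + 2) ^ p)) ≤
      (4 * p + 24) / k := by
  have hk1 : (1:ℝ) ≤ k := by exact_mod_cast hk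
  have hk0 : (0:ℝ) < k := by linarith
  set y : ℝ := (k:ℝ) + 2 with hy
  have hy0 : 0 < y := by linarith
  have hy1 : 1 ≤ y := by linarith
  have hpR : (1:ℝ) ≤ p := by exact_mod_cast hp1
  have hr0 : 0 < r := by linarith
  have e3 : (k:ℝ) + 3 = y + 1 := by rw [hy]; ring
  rw [e3]
  set L := Real.log ((y + 1) ^ p / y ^ p) with hL
  have hLlow : 1 / (y + 1) ≤ L := by
    rw [hL, ← div_pow, Real.log_pow]
    have h := Real.one_sub_inv_le_log_of_pos (x := (y + 1) / y) (by positivity)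
    have e : 1 - ((y + 1) / y)⁻¹ = 1 / (y + 1) := by field_simp; ring
    rw [e] at h
    have : 0 < 1 / (y + 1) := by positivity
    nlinarith
  have hLp : 0 < L := lt_of_lt_of_le (by positivity) hLlow
  have hLi : 1 / L ≤ y + 1 := by
    rw [div_le_iff₀ hLp]
    rw [div_le_iff₀ (by positivity)] at hLlow
    linarith
  -- gap
  obtain ⟨q, rfl⟩ : ∃ q, p = q + 1 := ⟨p - 1, by omega⟩
  have hgap : y ^ q ≤ y ^ (q + 1) - (r + c) := by
    have h3 : ((k:ℝ) + 1) ^ (q + 1) ≤ (y - 1) * y ^ q := by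
      have : (k:ℝ) + 1 = y - 1 := by rw [hy]; ring
      rw [this, pow_succ, mul_comm]
      gcongr
      linarith
    have h4 : y ^ (q + 1) = y * y ^ q := by ring
    rw [h4]
    nlinarith
  have hyq : 0 < y ^ q := by positivity
  have hfrac : y ^ (q + 1) / (y ^ (q + 1) - (r + c)) ^ 2 ≤ y / y ^ q := by
    calc y ^ (q + 1) / (y ^ (q + 1) - (r + c)) ^ 2 ≤ y ^ (q + 1) / (y ^ q) ^ 2 := by gcongr
      _ = y / y ^ q := by rw [pow_succ]; field_simp
  have hlog : Real.log (2 * y ^ (q + 1)) ≤ ((q + 1 : ℕ) + 1) * y := by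
    rw [Real.log_mul (by norm_num) (by positivity), Real.log_pow]
    have h5 : Real.log y ≤ y := (Real.log_le_sub_one_of_pos hy0).trans (by linarith)
    have h6 : Real.log 2 ≤ y := (Real.log_le_sub_one_of_pos (by norm_num)).trans (by linarith)
    nlinarith
  have hlogn : 0 ≤ Real.log (2 * y ^ (q + 1)) := by
    apply Real.log_nonneg
    have : 1 ≤ y ^ (q + 1) := one_le_pow₀ hy1
    linarith
  have hr4 : r ^ δ * (1 / y ^ q) ≤ 1 / y ^ 4 := by
    have h7 : r ^ δ ≤ y ^ (((q + 1 : ℕ) : ℝ) - 5) := by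
      have h8 : r ≤ y ^ (q + 1) := by linarith
      calc r ^ δ ≤ (y ^ (q + 1)) ^ δ := Real.rpow_le_rpow hr0.le h8 hδ0
        _ = y ^ (((q + 1 : ℕ) : ℝ) * δ) := by
            rw [← Real.rpow_natCast, ← Real.rpow_mul hy0.le]
        _ ≤ y ^ (((q + 1 : ℕ) : ℝ) - 5) := by
            apply Real.rpow_le_rpow_of_exponent_le hy1
            linarith
    have h9 : y ^ (((q + 1 : ℕ) : ℝ) - 5) = y ^ q / y ^ 4 := by
      have : (((q + 1 : ℕ) : ℝ) - 5) = (q:ℝ) - (4:ℕ) := by push_cast; ring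
      rw [this, Real.rpow_sub hy0, Real.rpow_natCast, Real.rpow_natCast]
    rw [h9] at h7
    calc r ^ δ * (1 / y ^ q) ≤ y ^ q / y ^ 4 * (1 / y ^ q) := by gcongr
      _ = 1 / y ^ 4 := by field_simp
  have hrs : r ^ δ * r ^ (-((1 + δ) / 2)) ≤ 2 / (k:ℝ) ^ 2 := by
    rw [← Real.rpow_add hr0]
    have e : δ + -((1 + δ) / 2) = -((1 - δ) / 2) := by ring
    rw [e]
    have h8 : (k:ℝ) ^ (q + 1) / 2 ≤ r := by linarith
    calc r ^ (-((1 - δ) / 2)) ≤ ((k:ℝ) ^ (q + 1) / 2) ^ (-((1 - δ) / 2)) :=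
          Real.rpow_le_rpow_of_nonpos (by positivity) h8 (by linarith)
      _ = (k:ℝ) ^ (((q + 1 : ℕ) : ℝ) * (-((1 - δ) / 2))) * 2 ^ ((1 - δ) / 2) := by
          rw [Real.div_rpow (by positivity) (by norm_num), ← Real.rpow_natCast,
            ← Real.rpow_mul hk0.le, Real.rpow_neg (by norm_num : (0:ℝ) ≤ 2)]
          field_simp
      _ ≤ (k:ℝ) ^ (-(2:ℝ)) * 2 ^ (1:ℝ) := by
          gcongr
          · nlinarith
          · norm_num
          · linarith
      _ = 2 / (k:ℝ) ^ 2 := by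
          rw [Real.rpow_neg hk0.le, Real.rpow_one]
          norm_cast
          field_simp
  have hrδ : 0 ≤ r ^ δ := by positivity
  set P : ℝ := ((q + 1 : ℕ) : ℝ) with hP
  have hyk : y ≤ 3 * k := by linarith
  have hky : (k:ℝ) ≤ y := by linarith
  have term1 : r ^ δ * (y ^ (q + 1) / (y ^ (q + 1) - (r + c)) ^ 2 *
      (1 + Real.log (2 * y ^ (q + 1)) / L)) ≤ (4 * P + 8) / k := by
    have hA : 1 + Real.log (2 * y ^ (q + 1)) / L ≤ (2 * P + 4) * y ^ 2 := by
      have : Real.log (2 * y ^ (q + 1)) / L ≤ ((P + 1) * y) * (y + 1) := by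
        rw [div_eq_mul_one_div]
        gcongr
      nlinarith
    calc r ^ δ * (y ^ (q + 1) / (y ^ (q + 1) - (r + c)) ^ 2 *
          (1 + Real.log (2 * y ^ (q + 1)) / L))
        ≤ r ^ δ * (y / y ^ q * ((2 * P + 4) * y ^ 2)) := by
          have : 0 ≤ 1 + Real.log (2 * y ^ (q + 1)) / L := by positivity
          gcongr
      _ = (r ^ δ * (1 / y ^ q)) * ((2 * P + 4) * y ^ 3) := by ring
      _ ≤ 1 / y ^ 4 * ((2 * P + 4) * y ^ 3) := by gcongr
      _ = (2 * P + 4) / y := by field_simp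
      _ ≤ (4 * P + 8) / k := by gcongr <;> linarith
  have term2 : r ^ δ * (r ^ (-((1 + δ) / 2)) / L) ≤ 8 / k := by
    calc r ^ δ * (r ^ (-((1 + δ) / 2)) / L) = (r ^ δ * r ^ (-((1 + δ) / 2))) * (1 / L) := by ring
      _ ≤ (2 / (k:ℝ) ^ 2) * (y + 1) := by gcongr
      _ ≤ (2 / (k:ℝ) ^ 2) * (4 * k) := by gcongr; linarith
      _ = 8 / k := by field_simp; norm_num
  rw [mul_add]
  refine (add_le_add term1 term2).trans ?_
  rw [← add_div]
  apply div_le_div_of_nonneg_right _ hk0.le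
  linarith
/-- **Difference analogue of the Lemma on the Logarithmic Derivative, finite order case.**
Let `f` be a non-constant meromorphic function on ℂ of finite order, `c ∈ ℂ` and `δ < 1`.
Then `m(r, f(z+c)/f(z)) = o(T(r+|c|, f) / r^δ)` as `r → ∞` outside a possible
exceptional set of finite logarithmic measure. -/
theorem log_difference_lemma_finite_order (f : ℂ → ℂ) (hf : MeromorphicOn f Set.univ)
    (hnc : Nonconstant f) (hord : FiniteOrder f) (c : ℂ) (δ : ℝ) (hδ : δ < 1) :
    ∃ E : Set ℝ, FinLogMeasure E ∧
      Tendsto (fun r : ℝ => nevm (fun z => f (z + c) / f z) r /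
          (nevT f (r + ‖c‖) / r ^ δ))
        (atTop ⊓ 𝓟 Eᶜ) (𝓝 0) := by
  classical
  have hfm : Meromorphic f := fun z => hf z (Set.mem_univ z)
  by_cases hn : ∃ a : ℂ, f =ᶠ[codiscrete ℂ] fun _ => a
  · obtain ⟨a, ha⟩ := hn
    refine ⟨∅, ⟨Set.empty_subset _, by simp⟩, ?_⟩
    refine tendsto_const_nhds.congr' ?_
    have h1 : ∀ᶠ r : ℝ in atTop ⊓ 𝓟 (∅ : Set ℝ)ᶜ, 0 < r :=
      (eventually_gt_atTop 0).filter_mono inf_le_left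
    filter_upwards [h1] with r hr
    rw [aux_trivial ha c hr.ne', zero_div]
  set T := ValueDistribution.characteristic f ⊤ with hT
  have hTm : MonotoneOn T (Set.Ioi 0) := ValueDistribution.characteristic_monotoneOn hfm
  have hTt : Tendsto T atTop atTop := aux_tendsto hfm hn
  obtain ⟨K, hK⟩ := hord
  have hK' : ∀ᶠ r in atTop, Real.log (T r) ≤ K * Real.log r := by
    filter_upwards [eventually_map.1 hK, eventually_gt_atTop 1] with r h1 h2
    rw [aux_nevT hf (by linarith), div_le_iff₀ (Real.log_pos h2)] at h1
    exact h1
  set δ' := max δ 0 with hδ'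
  have hδ0 : 0 ≤ δ' := le_max_right _ _
  have hδ1 : δ' < 1 := max_lt hδ (by norm_num)
  obtain ⟨p0, hp0⟩ := exists_nat_ge (5 / (1 - δ'))
  set p := p0 + 1 with hp
  have hp1 : 1 ≤ p := by omega
  have hp5 : 5 ≤ (p:ℝ) * (1 - δ') := by
    rw [div_le_iff₀ (by linarith)] at hp0
    rw [hp]; push_cast; nlinarith
  obtain ⟨C, hC0, hC⟩ := aux_bound hfm hn c (s := (1 + δ') / 2) (by linarith) (by linarith)
  obtain ⟨E, hE, k0, hk0⟩ := aux_growth hTm hTt hK' hp1 (norm_nonneg c)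
  refine ⟨E, hE, ?_⟩
  obtain ⟨t0, ht0⟩ := eventually_atTop.1 (hTt.eventually_ge_atTop 1)
  -- the integer k attached to r
  set κ : ℝ → ℕ := fun r => ⌊(r + ‖c‖) ^ ((p:ℝ)⁻¹)⌋₊ with hκ
  have hκt : Tendsto κ atTop atTop := by
    apply tendsto_nat_floor_atTop.comp
    apply (tendsto_rpow_atTop (by positivity)).comp
    exact tendsto_atTop_add_const_right _ _ tendsto_id
  have hlim : Tendsto (fun r => 2 * C * ((4 * p + 24) / (κ r : ℝ))) (atTop ⊓ 𝓟 Eᶜ) (𝓝 0) := by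
    have h1 : Tendsto (fun r => 2 * C * ((4 * (p:ℝ) + 24) / (κ r : ℝ))) atTop (𝓝 (2 * C * 0)) :=
      (tendsto_const_nhds.div_atTop (tendsto_natCast_atTop_atTop.comp hκt)).const_mul _
    rw [mul_zero] at h1
    exact h1.mono_left inf_le_left
  have hev : ∀ᶠ r in atTop ⊓ 𝓟 Eᶜ, r ∉ E ∧ 1 ≤ r ∧ ‖c‖ ≤ r ∧ k0 ≤ κ r ∧ 1 ≤ κ r ∧
      ⌈t0⌉₊ ≤ κ r := by
    have h1 : ∀ᶠ r in atTop ⊓ 𝓟 Eᶜ, r ∈ Eᶜ := mem_inf_of_right (mem_principal_self _)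
    have h2 : ∀ᶠ r in atTop, 1 ≤ r ∧ ‖c‖ ≤ r ∧ k0 ≤ κ r ∧ 1 ≤ κ r ∧ ⌈t0⌉₊ ≤ κ r :=
      (eventually_ge_atTop 1).and ((eventually_ge_atTop _).and
        ((hκt.eventually_ge_atTop _).and ((hκt.eventually_ge_atTop _).and
          (hκt.eventually_ge_atTop _))))
    exact h1.and (h2.filter_mono inf_le_left)
  have hnn : ∀ r, 0 ≤ nevm (fun z => f (z + c) / f z) r := by
    intro r
    rw [aux_nevm_prox]
    exact ValueDistribution.proximity_nonneg (f := fun z => f (z + c) / f z) (a := ⊤) r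
  have hcn := norm_nonneg c
  have hmain : ∀ r, (r ∉ E ∧ 1 ≤ r ∧ ‖c‖ ≤ r ∧ k0 ≤ κ r ∧ 1 ≤ κ r ∧ ⌈t0⌉₊ ≤ κ r) →
      0 < T (r + ‖c‖) ∧ nevm (fun z => f (z + c) / f z) r * r ^ δ ≤
        (2 * C * ((4 * p + 24) / (κ r : ℝ))) * T (r + ‖c‖) := by
    rintro r ⟨hrE, hr1, hcr, hk, hk1, hkt⟩
    have hk1R : (1:ℝ) ≤ κ r := by exact_mod_cast hk1
    have hkt' : t0 ≤ κ r := (Nat.le_ceil t0).trans (by exact_mod_cast hkt)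
    have hρ0 : 0 ≤ r + ‖c‖ := by linarith
    have hroot : ((r + ‖c‖) ^ ((p:ℝ)⁻¹)) ^ p = r + ‖c‖ :=
      Real.rpow_inv_natCast_pow hρ0 (by omega)
    have hrn : 0 ≤ (r + ‖c‖) ^ ((p:ℝ)⁻¹) := by positivity
    have h1 : (κ r : ℝ) ^ p ≤ r + ‖c‖ := by
      rw [← hroot]
      gcongr
      exact Nat.floor_le hrn
    have h2 : r + ‖c‖ < ((κ r : ℝ) + 1) ^ p := by
      conv_lhs => rw [← hroot]
      gcongr
      exact Nat.lt_floor_add_one _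
    set k := κ r with hkk
    have hg := hk0 k hk r (by linarith) hrE h1 h2
    have hself : ∀ x : ℝ, 1 ≤ x → x ≤ x ^ p := fun x hx => le_self_pow₀ hx (by omega)
    have hkp : (1:ℝ) ≤ (k:ℝ) ^ p := one_le_pow₀ hk1R
    have hT1 : 1 ≤ T ((k:ℝ) ^ p) := ht0 _ (hkt'.trans (hself _ hk1R))
    have hTρ : T ((k:ℝ) ^ p) ≤ T (r + ‖c‖) :=
      hTm (show (k:ℝ) ^ p ∈ Set.Ioi 0 by simp only [Set.mem_Ioi]; linarith)
        (show r + ‖c‖ ∈ Set.Ioi 0 by simp only [Set.mem_Ioi]; linarith) h1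
    have hR1 : 1 ≤ ((k:ℝ) + 2) ^ p := one_le_pow₀ (by linarith)
    have hTR : 1 ≤ T (((k:ℝ) + 2) ^ p) :=
      ht0 _ ((by linarith : t0 ≤ (k:ℝ) + 2).trans (hself _ (by linarith)))
    have hlt : r + ‖c‖ < ((k:ℝ) + 2) ^ p := by
      refine h2.trans_le ?_
      gcongr
      norm_num
    have hlt2 : ((k:ℝ) + 2) ^ p < ((k:ℝ) + 3) ^ p := by
      gcongr
      norm_num
    have hb := hC r _ _ (by linarith) hlt hlt2 hR1 hTR
    have he := aux_est hδ0 hδ1 hp1 hp5 hk1 hr1 hcn hcr h1 h2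
    refine ⟨by linarith, ?_⟩
    have hrr : r ^ δ ≤ r ^ δ' := Real.rpow_le_rpow_of_exponent_le hr1 (le_max_left _ _)
    set X := (((k:ℝ) + 2) ^ p / (((k:ℝ) + 2) ^ p - (r + ‖c‖)) ^ 2 *
      (1 + Real.log (2 * ((k:ℝ) + 2) ^ p) / Real.log (((k:ℝ) + 3) ^ p / ((k:ℝ) + 2) ^ p)) +
        r ^ (-((1 + δ') / 2)) / Real.log (((k:ℝ) + 3) ^ p / ((k:ℝ) + 2) ^ p)) with hX
    have hTR' : T (((k:ℝ) + 3) ^ p) ≤ 2 * T (r + ‖c‖) := by linarith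
    have hr' : 0 ≤ r ^ δ' := by positivity
    have hT3 : 0 ≤ T (((k:ℝ) + 3) ^ p) :=
      zero_le_one.trans (ht0 _ ((by linarith : t0 ≤ (k:ℝ) + 3).trans (hself _ (by linarith))))
    calc nevm (fun z => f (z + c) / f z) r * r ^ δ
        ≤ nevm (fun z => f (z + c) / f z) r * r ^ δ' := by
          have := hnn r
          gcongr
      _ ≤ (C * T (((k:ℝ) + 3) ^ p) * X) * r ^ δ' := by gcongr
      _ = (C * T (((k:ℝ) + 3) ^ p)) * (r ^ δ' * X) := by ring
      _ ≤ (C * T (((k:ℝ) + 3) ^ p)) * ((4 * p + 24) / (k : ℝ)) := by gcongr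
      _ ≤ (C * (2 * T (r + ‖c‖))) * ((4 * p + 24) / (k : ℝ)) := by gcongr
      _ = _ := by ring
  refine squeeze_zero' ?_ ?_ hlim
  · filter_upwards [hev] with r hr
    have h1 := hr.2.1
    rw [aux_nevT hf (by linarith)]
    have := (hmain r hr).1
    have := hnn r
    have hrr : 0 ≤ r ^ δ := by positivity
    exact div_nonneg (hnn r) (div_nonneg (hmain r hr).1.le hrr)
  · filter_upwards [hev] with r hr
    have h1 := hr.2.1
    rw [aux_nevT hf (by linarith), div_div_eq_mul_div, div_le_iff₀ (hmain r hr).1]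
    exact (hmain r hr).2
end
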